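/- Suppose the open set ω ⊂ 𝕋² satisfies the strip assumption, let x₀ ∈ ω and r₀ > 0 with B(x₀,2r₀) ⊂ ω, let 𝔟 ∈ ℝ∖{0} and R > 0. Then there exist T > 0 and c₀ > 0 such that for every speed of light c ≥ c₀ there exist a smooth f̄ : [0,T]×𝕋²×ℝ² → ℝ, compactly supported in v, a smooth potential φ̄ : [0,T]×𝕋² → ℝ, and a smooth source Ḡ with spatial support contained in ω, such that: (i) ∂ₜf̄ + v̂·∇ₓf̄ + div_v[(∇ₓφ̄ + v̂⊥𝔟) f̄] = Ḡ and Δₓφ̄ = ∫_{ℝ²} f̄ dv − ∫_{𝕋²×ℝ²} f̄ dv dx on [0,T]; (ii) f̄(0,·,·) = f̄(T,·,·) = 0; (iii) for every t ∈ [0,T] and v ∈ ℝ², x ↦ f̄(t,x,v) is compactly supported in ω; (iv) the relativistic characteristics (X,V) associated with ∇ₓφ̄ + v̂⊥𝔟 satisfy: for every x ∈ 𝕋² and v ∈ B(0,R) there exists t ∈ [T/9, 8T/9] with X(t,0,x,v) ∈ B(x₀, r₀/2) and |V(t,0,x,v)| ≥ 5; (v) with ρ̄ := ∫_{ℝ²}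 f̄ dv and j̄ := ∫_{ℝ²} f̄ v̂ dv, the local conservation of charge ∂ₜρ̄ + divₓ j̄ = 0 holds for all (t,x) ∈ [0,T]×𝕋², and ∫_{𝕋²} j̄ dx = 0 for all t ∈ [0,T]. Moreover ρ̄ and j̄ can be chosen independently of c ∈ [c₀,∞). -/

import Mathlib

noncomputable section

open MeasureTheory Real

/-- Points of the plane; the torus `𝕋²` is represented via `ℤ²`-periodic objects on `ℝ²`. -/
abbrev V2 := ℝ × ℝ

/-- `v ↦ v⊥ = (v₂, -v₁)`. -/
def pperp (v : V2) : V2 := (v.2, -v.1)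

/-- Euclidean norm on `ℝ²`. -/
noncomputable def en (v : V2) : ℝ := Real.sqrt (v.1 ^ 2 + v.2 ^ 2)

/-- Relativistic velocity `v̂ = v/√(1+|v|²/c²)` for speed of light `c`. -/
noncomputable def vhat (c : ℝ) (v : V2) : V2 :=
  (1 / Real.sqrt (1 + (v.1 ^ 2 + v.2 ^ 2) / c ^ 2)) • v

/-- `ℤ²`-periodicity of a function on `ℝ²` (i.e. the function lives on the torus `𝕋²`). -/
def Zper {α : Type*} (g : V2 → α) : Prop :=
  ∀ (x : V2) (m n : ℤ), g (x.1 + (m : ℝ), x.2 + (n : ℝ)) = g x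

/-- A fundamental domain for the torus. -/
def unitSq : Set V2 := Set.Icc ((0 : ℝ), (0 : ℝ)) ((1 : ℝ), (1 : ℝ))

/-- Integral over the torus of a (periodic) function. -/
noncomputable def intT2 (g : V2 → ℝ) : ℝ := ∫ x in unitSq, g x

/-- Integral over `𝕋² × ℝ²`. -/
noncomputable def intT2R2 (g : V2 → V2 → ℝ) : ℝ := ∫ x in unitSq, ∫ v : V2, g x v

/-- Spatial divergence of a vector field on `ℝ²`. -/
noncomputable def divF (E : V2 → V2) (x : V2) : ℝ :=
  fderiv ℝ (fun y => (E y).1) x ((1 : ℝ), (0 : ℝ)) +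
    fderiv ℝ (fun y => (E y).2) x ((0 : ℝ), (1 : ℝ))

/-- Geometric control condition for a (periodic) set `ω ⊆ 𝕋²`. -/
def GCC (ω : Set V2) : Prop :=
  ∀ x e : V2, en e = 1 → ∃ y : ℝ, 0 ≤ y ∧ x + y • e ∈ ω

/-- Open ball of the torus, of center `x₀` and radius `r` (as a periodic subset of `ℝ²`). -/
def ballT2 (x₀ : V2) (r : ℝ) : Set V2 :=
  {x : V2 | ∃ m n : ℤ, en (x.1 - (x₀.1 + (m : ℝ)), x.2 - (x₀.2 + (n : ℝ))) < r}

/-- The full preimage in `ℝ²` of the image in `𝕋²` of the line through `p` directed by `d`. -/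
def periodizedLine (p d : V2) : Set V2 :=
  {x : V2 | ∃ (t : ℝ) (m n : ℤ), x = p + t • d + ((m : ℝ), (n : ℝ))}

/-- The strip assumption: `ω` contains the image of a straight line of `ℝ²`
which is closed in the torus. -/
def StripAssumption (ω : Set V2) : Prop :=
  ∃ p d : V2, d ≠ 0 ∧ IsClosed (periodizedLine p d) ∧ periodizedLine p d ⊆ ω

/-- All iterated derivatives of order at most `k` are bounded by `κ` in sup norm. -/
def DerivBound {E F : Type*} [NormedAddCommGroup E] [NormedSpace ℝ E]
    [NormedAddCommGroup F] [NormedSpace ℝ F] (k : ℕ) (κ : ℝ) (g : E → F) : Prop :=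
  ∀ i : ℕ, i ≤ k → ∀ p, ‖iteratedFDeriv ℝ i g p‖ ≤ κ

/-- Relativistic characteristics for the force field `Force`, with speed of light `c`,
starting from `(x,v)` at time `s`. -/
def IsRelChar (c : ℝ) (Force : ℝ → V2 → V2 → V2) (s : ℝ) (x v : V2)
    (X V : ℝ → V2) : Prop :=
  X s = x ∧ V s = v ∧
    ∀ t : ℝ, HasDerivAt X (vhat c (V t)) t ∧ HasDerivAt V (Force t (X t) (V t)) t

/-- `(F, E, b)` is a classical, `𝕋²`-periodic solution on `[0,T]` of the 2D relativistic
Vlasov–Maxwell system with speed of light `c` and source `S`. -/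
def IsVMSolution (c T : ℝ) (F : ℝ × V2 × V2 → ℝ) (E : ℝ × V2 → V2)
    (b : ℝ × V2 → ℝ) (S : ℝ × V2 × V2 → ℝ) : Prop :=
  ContDiff ℝ 1 F ∧ ContDiff ℝ 1 E ∧ ContDiff ℝ 1 b ∧
  (∀ t v, Zper fun x => F (t, x, v)) ∧ (∀ t, Zper fun x => E (t, x)) ∧
  (∀ t, Zper fun x => b (t, x)) ∧
  ∀ t ∈ Set.Icc (0 : ℝ) T, ∀ x v : V2,
    -- Vlasov equation: ∂ₜf + v̂·∇ₓf + (E + c⁻¹ v̂⊥ b)·∇ᵥf = S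
    (fderiv ℝ F (t, x, v)
        ((1 : ℝ), vhat c v, E (t, x) + (c⁻¹ * b (t, x)) • pperp (vhat c v))
      = S (t, x, v)) ∧
    -- ∂ₜE₁ − c ∂_{x₂} b = −∫ f v̂₁ dv
    (fderiv ℝ (fun p => (E p).1) (t, x) ((1 : ℝ), ((0 : ℝ), (0 : ℝ)))
        - c * fderiv ℝ b (t, x) ((0 : ℝ), ((0 : ℝ), (1 : ℝ)))
      = -∫ w : V2, F (t, x, w) * (vhat c w).1) ∧
    -- ∂ₜE₂ + c ∂_{x₁} b = −∫ f v̂₂ dv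
    (fderiv ℝ (fun p => (E p).2) (t, x) ((1 : ℝ), ((0 : ℝ), (0 : ℝ)))
        + c * fderiv ℝ b (t, x) ((0 : ℝ), ((1 : ℝ), (0 : ℝ)))
      = -∫ w : V2, F (t, x, w) * (vhat c w).2) ∧
    -- ∂ₜb + c (∂_{x₁}E₂ − ∂_{x₂}E₁) = 0
    (fderiv ℝ b (t, x) ((1 : ℝ), ((0 : ℝ), (0 : ℝ)))
        + c * (fderiv ℝ (fun p => (E p).2) (t, x) ((0 : ℝ), ((1 : ℝ), (0 : ℝ)))
            - fderiv ℝ (fun p => (E p).1) (t, x) ((0 : ℝ), ((0 : ℝ), (1 : ℝ)))) = 0) ∧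
    -- Gauss law: ∂_{x₁}E₁ + ∂_{x₂}E₂ = ∫ f dv − ∫∫ f dv dx
    (fderiv ℝ (fun p => (E p).1) (t, x) ((0 : ℝ), ((1 : ℝ), (0 : ℝ)))
        + fderiv ℝ (fun p => (E p).2) (t, x) ((0 : ℝ), ((0 : ℝ), (1 : ℝ)))
      = (∫ w : V2, F (t, x, w)) - intT2R2 fun y w => F (t, y, w))


/-- Spatial gradient of a time-dependent potential. -/
noncomputable def gradx (φ : ℝ × V2 → ℝ) (t : ℝ) (x : V2) : V2 :=
  (fderiv ℝ (fun y => φ (t, y)) x ((1 : ℝ), (0 : ℝ)),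
   fderiv ℝ (fun y => φ (t, y)) x ((0 : ℝ), (1 : ℝ)))

/-- Spatial Laplacian of a time-dependent potential. -/
noncomputable def lapx (φ : ℝ × V2 → ℝ) (t : ℝ) (x : V2) : ℝ :=
  fderiv ℝ (fun y => fderiv ℝ (fun z => φ (t, z)) y ((1 : ℝ), (0 : ℝ))) x
      ((1 : ℝ), (0 : ℝ)) +
    fderiv ℝ (fun y => fderiv ℝ (fun z => φ (t, z)) y ((0 : ℝ), (1 : ℝ))) x
      ((0 : ℝ), (1 : ℝ))

/-!
Unless `ω` is everything, a closed line of the torus contained in `ω` has a coprime integer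
direction `d`, and the potentials `W x = A cos (2π d·x + α) e (d ∧ x)`, where `e` is the
exponential of rate `2π`, are harmonic. To make them periodic, `e` is flattened near the line, so
that `ΔW` is supported in `ω`; and two phases `α` give gradients which are never both small.

Short kicks by these two fields, separated by two cyclotron periods in the magnetic field alone,
leave every slow particle fast after one of them: a particle which the first kick leaves slow
stands, two periods later, close to where it was kicked when `c` is large, and the second field is
strong there. The Larmor circle of a fast particle is so large that it meets every ball of the
torus within a cyclotron period.

The charge of `η(t) W` is `η ΔW`, and `η' J` is a current conserving it whenever `div J = -ΔW`; one
can choose `J` of mean zero and supported in `ω`. The density `f` is an even bump in `v` multiplied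
by `ρ + κ √(1+|v|²/c²) j·v`: the square root cancels the one in the relativistic velocity, so the
moments of `f` are `ρ` and `j` for every `c`. Finally `G` is defined by the Vlasov equation.
-/

/-! ### Closed lines of the torus -/

lemma en_sq (v : V2) : en v ^ 2 = v.1 ^ 2 + v.2 ^ 2 := Real.sq_sqrt (by positivity)

lemma en_nonneg (v : V2) : 0 ≤ en v := Real.sqrt_nonneg _

lemma en_eq_zero {v : V2} : en v = 0 ↔ v = 0 := by
  rw [en, Real.sqrt_eq_zero (by positivity), Prod.ext_iff,
    add_eq_zero_iff_of_nonneg (sq_nonneg _) (sq_nonneg _)]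
  simp

/-- The linear form `x ↦ d · x`, measuring positions along the direction `d`. -/
def along (d : V2) : V2 →L[ℝ] ℝ :=
  d.1 • ContinuousLinearMap.fst ℝ ℝ ℝ + d.2 • ContinuousLinearMap.snd ℝ ℝ ℝ

/-- The linear form `x ↦ d ∧ x`, measuring positions across the lines directed by `d`. -/
def across (d : V2) : V2 →L[ℝ] ℝ :=
  d.1 • ContinuousLinearMap.snd ℝ ℝ ℝ - d.2 • ContinuousLinearMap.fst ℝ ℝ ℝ

lemma along_apply (d x : V2) : along d x = d.1 * x.1 + d.2 * x.2 := rfl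

lemma across_apply (d x : V2) : across d x = d.1 * x.2 - d.2 * x.1 := rfl

lemma across_pperp_self (d : V2) : across d (pperp d) = -en d ^ 2 := by
  rw [across_apply, en_sq, pperp]
  ring

lemma across_surjective {d : V2} (hd : d ≠ 0) : Function.Surjective (across d) := by
  refine LinearMap.surjective (f := (across d : V2 →ₗ[ℝ] ℝ)) fun h ↦ hd ?_
  have : across d (pperp d) = 0 := LinearMap.congr_fun h _
  rwa [across_pperp_self, neg_eq_zero, sq_eq_zero_iff, en_eq_zero] at this

lemma periodizedLine_eq_preimage {d : V2} (hd : d ≠ 0) (p : V2) :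
    periodizedLine p d = (fun x ↦ across d (x - p)) ⁻¹' AddSubgroup.closure {d.1, d.2} := by
  ext x
  simp only [Set.mem_preimage, SetLike.mem_coe, AddSubgroup.mem_closure_pair, zsmul_eq_mul,
    across_apply, Prod.fst_sub, Prod.snd_sub]
  constructor
  · rintro ⟨t, m, n, rfl⟩
    refine ⟨n, -m, ?_⟩
    simp only [Prod.fst_add, Prod.snd_add, Prod.smul_fst, Prod.smul_snd, smul_eq_mul]
    push_cast
    ring
  · rintro ⟨n, m, h⟩
    have hd' : d.1 ^ 2 + d.2 ^ 2 ≠ 0 := by rwa [← en_sq, Ne, sq_eq_zero_iff, en_eq_zero]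
    refine ⟨along d (x - p - (((-m : ℤ) : ℝ), (n : ℝ))) / (d.1 ^ 2 + d.2 ^ 2), -m, n, ?_⟩
    ext <;> simp only [along_apply, Prod.fst_add, Prod.snd_add, Prod.fst_sub, Prod.snd_sub,
      Prod.smul_fst, Prod.smul_snd, smul_eq_mul] <;> push_cast <;> field_simp
    · linear_combination d.2 * h
    · linear_combination -d.1 * h

lemma periodizedLine_eq_univ_of_dense {p d : V2} (hd : d ≠ 0)
    (hclosed : IsClosed (periodizedLine p d))
    (hdense : Dense (AddSubgroup.closure {d.1, d.2} : Set ℝ)) : periodizedLine p d = Set.univ := by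
  have hopen : IsOpenMap fun x ↦ across d (x - p) :=
    ((across d).isOpenMap (across_surjective hd)).comp (Homeomorph.subRight p).isOpenMap
  rw [← hclosed.closure_eq, periodizedLine_eq_preimage hd]
  exact (hdense.preimage hopen).closure_eq

lemma exists_isCoprime_smul {d : V2} {g : ℝ} (hd : d ≠ 0)
    (hg : AddSubgroup.closure {d.1, d.2} = AddSubgroup.closure {g}) :
    ∃ k₁ k₂ : ℤ, IsCoprime k₁ k₂ ∧ g ≠ 0 ∧ d = g • ((k₁ : ℝ), (k₂ : ℝ)) := by
  have h₁ : d.1 ∈ AddSubgroup.closure {g} := hg ▸ AddSubgroup.subset_closure (by simp)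
  have h₂ : d.2 ∈ AddSubgroup.closure {g} := hg ▸ AddSubgroup.subset_closure (by simp)
  have h₃ : g ∈ AddSubgroup.closure {d.1, d.2} := hg ▸ AddSubgroup.subset_closure (by simp)
  obtain ⟨k₁, hk₁⟩ := AddSubgroup.mem_closure_singleton.1 h₁
  obtain ⟨k₂, hk₂⟩ := AddSubgroup.mem_closure_singleton.1 h₂
  obtain ⟨m, n, hmn⟩ := AddSubgroup.mem_closure_pair.1 h₃
  simp only [zsmul_eq_mul] at hk₁ hk₂ hmn
  have hg0 : g ≠ 0 := by
    rintro rfl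
    exact hd (Prod.ext (by simpa using hk₁.symm) (by simpa using hk₂.symm))
  refine ⟨k₁, k₂, ⟨m, n, ?_⟩, hg0, Prod.ext ?_ ?_⟩
  · have : (m : ℝ) * k₁ + n * k₂ = 1 := by
      apply mul_right_cancel₀ hg0
      linear_combination hmn + (m : ℝ) * hk₁ + (n : ℝ) * hk₂
    exact_mod_cast this
  · simpa [mul_comm] using hk₁.symm
  · simpa [mul_comm] using hk₂.symm

lemma add_smul_mem_periodizedLine_smul (p d : V2) {g : ℝ} (hg : g ≠ 0) (t : ℝ) :
    p + t • d ∈ periodizedLine p (g • d) :=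
  ⟨t / g, 0, 0, by rw [smul_smul, div_mul_cancel₀ t hg]; simp⟩

lemma Zper.add_mem {ω : Set V2} (hper : Zper fun x ↦ x ∈ ω) {x : V2} (hx : x ∈ ω) (m n : ℤ) :
    x + ((m : ℝ), (n : ℝ)) ∈ ω :=
  (hper x m n).mpr hx

lemma exists_forall_add_mem_of_integer_line_subset {ω : Set V2} (hω : IsOpen ω)
    (hper : Zper fun x ↦ x ∈ ω) {p : V2} {k₁ k₂ : ℤ}
    (hline : ∀ t : ℝ, p + t • ((k₁ : ℝ), (k₂ : ℝ)) ∈ ω) :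
    ∃ ε > (0 : ℝ), ∀ (t : ℝ) (δ : V2), ‖δ‖ < ε → p + t • ((k₁ : ℝ), (k₂ : ℝ)) + δ ∈ ω := by
  have hK : IsCompact ((fun t : ℝ ↦ p + t • ((k₁ : ℝ), (k₂ : ℝ))) '' Set.Icc 0 1) :=
    isCompact_Icc.image (by fun_prop)
  obtain ⟨ε, hε, hsub⟩ := hK.exists_thickening_subset_open hω
    (Set.image_subset_iff.2 fun t _ ↦ hline t)
  refine ⟨ε, hε, fun t δ hδ ↦ ?_⟩
  have hmem : p + Int.fract t • ((k₁ : ℝ), (k₂ : ℝ)) + δ ∈ ω := by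
    refine hsub (Metric.mem_thickening_iff.2 ⟨_, ⟨Int.fract t,
      ⟨Int.fract_nonneg t, (Int.fract_lt_one t).le⟩, rfl⟩, ?_⟩)
    simpa [dist_eq_norm] using hδ
  convert hper.add_mem hmem (⌊t⌋ * k₁) (⌊t⌋ * k₂) using 1
  ext <;> simp only [Prod.fst_add, Prod.snd_add, Prod.smul_fst, Prod.smul_snd, smul_eq_mul,
    Int.fract] <;> push_cast <;> ring

lemma exists_strip_subset_of_isCoprime {ω : Set V2} (hω : IsOpen ω) (hper : Zper fun x ↦ x ∈ ω)
    {p : V2} {k₁ k₂ : ℤ} (hk : IsCoprime k₁ k₂)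
    (hline : ∀ t : ℝ, p + t • ((k₁ : ℝ), (k₂ : ℝ)) ∈ ω) :
    ∃ ε > (0 : ℝ), ∀ (x : V2) (j : ℤ), |across (k₁, k₂) (x - p) - j| < ε → x ∈ ω := by
  obtain ⟨ε, hε, hmem⟩ := exists_forall_add_mem_of_integer_line_subset hω hper hline
  obtain ⟨m, n, hmn⟩ := hk
  have bezout : (m : ℝ) * k₁ + n * k₂ = 1 := by exact_mod_cast hmn
  let e : V2 := (-n, m)
  refine ⟨ε / (‖e‖ + 1), by positivity, fun x j hx ↦ ?_⟩
  set δ := across (k₁, k₂) (x - p) - j with hδ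
  have hδe : ‖δ • e‖ < ε := by
    rw [lt_div_iff₀ (by positivity)] at hx
    rw [norm_smul, Real.norm_eq_abs]
    nlinarith [abs_nonneg δ]
  convert hper.add_mem (hmem (m * (x.1 - p.1) + n * (x.2 - p.2)) (δ • e) hδe) (-n * j) (m * j)
    using 1
  rw [hδ, across_apply]
  ext <;> simp only [e, Prod.fst_add, Prod.snd_add, Prod.fst_sub, Prod.snd_sub, Prod.smul_fst,
    Prod.smul_snd, smul_eq_mul] <;> push_cast
  · linear_combination (p.1 - x.1) * bezout
  · linear_combination (p.2 - x.2) * bezout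

lemma cos_two_pi_mul_le {ε y : ℝ} (hε : 0 ≤ ε) (hy : ε ≤ |y - round y|) :
    cos (2 * π * y) ≤ cos (2 * π * ε) := by
  have hround : |y - round y| ≤ 1 / 2 := abs_sub_round y
  calc cos (2 * π * y) = cos (2 * π * y - round y * (2 * π)) :=
        (Real.cos_sub_int_mul_two_pi _ _).symm
    _ = cos |2 * π * (y - round y)| := by rw [Real.cos_abs]; ring_nf
    _ = cos (2 * π * |y - round y|) := by rw [abs_mul, abs_of_pos Real.two_pi_pos]
    _ ≤ cos (2 * π * ε) := by
        apply Real.cos_le_cos_of_nonneg_of_le_pi (by positivity) (by nlinarith [Real.pi_pos])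
        gcongr

lemma StripAssumption.exists_cos_le {ω : Set V2} (hω : IsOpen ω) (hper : Zper fun x ↦ x ∈ ω)
    (hs : StripAssumption ω) :
    ∃ k₁ k₂ : ℤ, ((k₁ : ℝ), (k₂ : ℝ)) ≠ 0 ∧ ∃ s₀ κ : ℝ, κ < 1 ∧
      ∀ x ∉ ω, cos (2 * π * (across (k₁, k₂) x - s₀)) ≤ κ := by
  obtain ⟨p, d, hd, hclosed, hsub⟩ := hs
  rcases AddSubgroup.dense_or_cyclic (AddSubgroup.closure {d.1, d.2}) with hdense | ⟨g, hg⟩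
  · rw [periodizedLine_eq_univ_of_dense hd hclosed hdense] at hsub
    exact ⟨1, 0, by simp, 0, 0, one_pos, fun x hx ↦ (hx (hsub trivial)).elim⟩
  · obtain ⟨k₁, k₂, hk, hg0, rfl⟩ := exists_isCoprime_smul hd hg
    obtain ⟨ε, hε, hstrip⟩ := exists_strip_subset_of_isCoprime hω hper hk fun t ↦
      hsub (add_smul_mem_periodizedLine_smul p _ hg0 t)
    refine ⟨k₁, k₂, right_ne_zero_of_smul hd, across (k₁, k₂) p, cos (2 * π * min ε (1 / 2)),
      ?_, fun x hx ↦ cos_two_pi_mul_le (by positivity) ?_⟩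
    · calc cos (2 * π * min ε (1 / 2)) < cos 0 :=
            Real.cos_lt_cos_of_nonneg_of_le_pi le_rfl
              (by nlinarith [Real.pi_pos, min_le_right ε (1 / 2)]) (by positivity)
        _ = 1 := Real.cos_zero
    · by_contra! hlt
      refine hx (hstrip x (round (across (k₁, k₂) x - across (k₁, k₂) p)) ?_)
      rw [map_sub]
      exact hlt.trans_le (min_le_left _ _)

/-! ### Periodic exponentials -/

section Profile

open scoped Topology ContDiff

/-- A smooth `1`-periodic cutoff, equal to `1` where `cos (2πs) ≤ κ` and to `0` where
`κ' ≤ cos (2πs)`, hence near the integers when `κ' < 1`. -/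
def cosCutoff (κ κ' s : ℝ) : ℝ :=
  Real.smoothTransition ((κ' - cos (2 * π * s)) / (κ' - κ))

/-- The `1`-periodic exponential `s ↦ exp (l {s})`, flattened to `1` near the integers where the
fractional part `{s}` jumps. It replaces the exponential, which is not periodic. -/
def expProfile (l κ κ' s : ℝ) : ℝ := 1 + cosCutoff κ κ' s * (exp (l * Int.fract s) - 1)

variable {l κ κ' s : ℝ}

lemma contDiff_cosCutoff (κ κ' : ℝ) : ContDiff ℝ ∞ (cosCutoff κ κ') := by
  refine Real.smoothTransition.contDiff.comp (ContDiff.div_const ?_ _)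
  exact contDiff_const.sub (Real.contDiff_cos.comp (by fun_prop))

lemma cosCutoff_of_cos_le (hκ : κ < κ') (hs : cos (2 * π * s) ≤ κ) : cosCutoff κ κ' s = 1 :=
  Real.smoothTransition.one_of_one_le (by rw [le_div_iff₀ (sub_pos.2 hκ)]; linarith)

lemma cosCutoff_of_le_cos (hκ : κ < κ') (hs : κ' ≤ cos (2 * π * s)) : cosCutoff κ κ' s = 0 :=
  Real.smoothTransition.zero_of_nonpos
    (div_nonpos_of_nonpos_of_nonneg (sub_nonpos.2 hs) (sub_nonneg.2 hκ.le))

lemma fract_eventuallyEq_sub_floor (hs : cos (2 * π * s) ≠ 1) :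
    Int.fract =ᶠ[𝓝 s] fun u ↦ u - ⌊s⌋ := by
  have hne : (⌊s⌋ : ℝ) ≠ s := fun h ↦ hs <| by
    rw [← h, mul_comm, Real.cos_int_mul_two_pi]
  filter_upwards [Ioo_mem_nhds ((Int.floor_le s).lt_of_ne hne) (Int.lt_floor_add_one s)]
    with u hu
  rw [Int.fract, Int.floor_eq_iff.2 ⟨hu.1.le, hu.2⟩]

lemma contDiff_expProfile (l : ℝ) (hκ : κ < κ') (hκ' : κ' < 1) :
    ContDiff ℝ ∞ (expProfile l κ κ') := by
  refine contDiff_iff_contDiffAt.2 fun s ↦ ?_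
  by_cases hs : cos (2 * π * s) = 1
  · have hcos : Continuous fun u : ℝ ↦ cos (2 * π * u) := by fun_prop
    have hone : expProfile l κ κ' =ᶠ[𝓝 s] fun _ ↦ 1 := by
      filter_upwards [hcos.continuousAt.eventually (lt_mem_nhds (hs ▸ hκ'))] with u hu
      rw [expProfile, cosCutoff_of_le_cos hκ hu.le, zero_mul, add_zero]
    exact contDiffAt_const.congr_of_eventuallyEq hone
  · have hexp : (fun u ↦ exp (l * Int.fract u)) =ᶠ[𝓝 s] fun u ↦ exp (l * (u - ⌊s⌋)) := by
      filter_upwards [fract_eventuallyEq_sub_floor hs] with u hu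
      rw [hu]
    have hsmooth : ContDiffAt ℝ ∞ (fun u ↦ exp (l * Int.fract u)) s :=
      ContDiffAt.congr_of_eventuallyEq (by fun_prop) hexp
    exact contDiffAt_const.add
      ((contDiff_cosCutoff κ κ').contDiffAt.mul (hsmooth.sub contDiffAt_const))

lemma expProfile_periodic (l κ κ' : ℝ) : Function.Periodic (expProfile l κ κ') 1 := fun s ↦ by
  have hcos : cos (2 * π * (s + 1)) = cos (2 * π * s) := by
    rw [mul_add, mul_one, Real.cos_add_two_pi]
  rw [expProfile, expProfile, cosCutoff, cosCutoff, hcos, Int.fract_add_one]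

lemma one_le_expProfile (hl : 0 ≤ l) (κ κ' s : ℝ) : 1 ≤ expProfile l κ κ' s := by
  have hexp : 1 ≤ exp (l * Int.fract s) := Real.one_le_exp (mul_nonneg hl (Int.fract_nonneg s))
  exact le_add_of_nonneg_right
    (mul_nonneg (Real.smoothTransition.nonneg _) (sub_nonneg.2 hexp))

lemma deriv_deriv_exp_mul_sub (l a : ℝ) :
    deriv (deriv fun u ↦ exp (l * (u - a))) = fun u ↦ l ^ 2 * exp (l * (u - a)) := by
  have hexp : ∀ u, HasDerivAt (fun u ↦ exp (l * (u - a))) (l * exp (l * (u - a))) u := fun u ↦ by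
    simpa [mul_comm] using (((hasDerivAt_id u).sub_const a).const_mul l).exp
  rw [funext fun u ↦ (hexp u).deriv]
  funext u
  rw [((hexp u).const_mul l).deriv]
  ring

lemma deriv_deriv_expProfile (l : ℝ) (hκ : κ < κ') (hκ' : κ ≤ 1) (hs : cos (2 * π * s) < κ) :
    deriv (deriv (expProfile l κ κ')) s = l ^ 2 * expProfile l κ κ' s := by
  have hcos : Continuous fun u : ℝ ↦ cos (2 * π * u) := by fun_prop
  have hexp : expProfile l κ κ' =ᶠ[𝓝 s] fun u ↦ exp (l * (u - ⌊s⌋)) := by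
    filter_upwards [hcos.continuousAt.eventually (gt_mem_nhds hs),
      fract_eventuallyEq_sub_floor (hs.trans_le hκ').ne] with u hu hfract
    rw [expProfile, cosCutoff_of_cos_le hκ hu.le, hfract]
    ring
  rw [hexp.deriv.deriv_eq, hexp.eq_of_nhds, deriv_deriv_exp_mul_sub]

end Profile

/-! ### Large circles of the torus -/

lemma exists_nat_int_abs_sub_lt {y : ℕ → ℝ} {N : ℕ} {r : ℝ} (hdrop : y N ≤ y 0 - 1)
    (hstep : ∀ k < N, y k - y (k + 1) < r) (q : ℝ) :
    ∃ k ≤ N, ∃ m : ℤ, |y k - (q + m)| < r := by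
  classical
  have hstart : q + ⌊y 0 - q⌋ ≤ y 0 := by linarith [Int.floor_le (y 0 - q)]
  have hbelow : y 0 - 1 < q + ⌊y 0 - q⌋ := by linarith [Int.lt_floor_add_one (y 0 - q)]
  have hex : ∃ k, y k < q + ⌊y 0 - q⌋ := ⟨N, by linarith⟩
  have hspec := Nat.find_spec hex
  have hle : Nat.find hex ≤ N := Nat.find_min' hex (by linarith)
  obtain ⟨j, hj⟩ : ∃ j, Nat.find hex = j + 1 := by
    refine Nat.exists_eq_succ_of_ne_zero fun h ↦ ?_
    rw [h] at hspec
    linarith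
  have hprev := not_lt.1 (Nat.find_min hex (show j < Nat.find hex by lia))
  have hlt := hstep j (by lia)
  refine ⟨Nat.find hex, hle, ⌊y 0 - q⌋, ?_⟩
  rw [hj] at hspec ⊢
  rw [abs_lt]
  constructor <;> linarith

lemma sqrt_sq_sub_sq_sub_mem_Icc {ρ s s' : ℝ} (hρ : 0 < ρ) (hs : 0 ≤ s) (hss' : s ≤ s')
    (hs' : s' ≤ ρ / 2) :
    √(ρ ^ 2 - s ^ 2) - √(ρ ^ 2 - s' ^ 2) ∈
      Set.Icc ((s' ^ 2 - s ^ 2) / (2 * ρ)) ((s' ^ 2 - s ^ 2) / ρ) := by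
  have hbounds : ∀ u, 0 ≤ u → u ≤ ρ / 2 → √(ρ ^ 2 - u ^ 2) ^ 2 = ρ ^ 2 - u ^ 2 ∧
      ρ / 2 ≤ √(ρ ^ 2 - u ^ 2) ∧ √(ρ ^ 2 - u ^ 2) ≤ ρ := fun u hu hu' ↦
    ⟨Real.sq_sqrt (by nlinarith), Real.le_sqrt_of_sq_le (by nlinarith),
      Real.sqrt_le_iff.2 ⟨hρ.le, by nlinarith⟩⟩
  obtain ⟨hsq, hlow, hup⟩ := hbounds s hs (hss'.trans hs')
  obtain ⟨hsq', hlow', hup'⟩ := hbounds s' (hs.trans hss') hs'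
  have hanti : √(ρ ^ 2 - s' ^ 2) ≤ √(ρ ^ 2 - s ^ 2) := Real.sqrt_le_sqrt (by nlinarith)
  rw [Set.mem_Icc, div_le_iff₀ (by positivity), le_div_iff₀ hρ]
  constructor <;> nlinarith

lemma exists_abs_sqrt_sq_sub_sq_sub_lt {ρ r f : ℝ} (hρ : 6 ≤ √(2 * ρ)) (hρr : 6 < r * √(2 * ρ))
    (hf : 0 ≤ f) (hf' : f < 1) (q : ℝ) :
    ∃ (k : ℕ) (m : ℤ), f + k ≤ ρ ∧ |√(ρ ^ 2 - (f + k) ^ 2) - (q + m)| < r := by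
  set σ := √(2 * ρ) with hσ
  have hσsq : σ ^ 2 = 2 * ρ := Real.sq_sqrt (by
    by_contra! h
    rw [hσ, Real.sqrt_eq_zero_of_nonpos h.le] at hρ
    linarith)
  have hρ0 : 0 < ρ := by nlinarith
  have hN : σ ≤ ⌈σ⌉₊ := Nat.le_ceil σ
  have hN' : (⌈σ⌉₊ : ℝ) < σ + 1 := Nat.ceil_lt_add_one (by linarith)
  have hhalf : f + ⌈σ⌉₊ ≤ ρ / 2 := by nlinarith
  let y : ℕ → ℝ := fun k ↦ √(ρ ^ 2 - (f + k) ^ 2)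
  have hdrop : y ⌈σ⌉₊ ≤ y 0 - 1 := by
    have hone : 1 ≤ ((f + ⌈σ⌉₊) ^ 2 - f ^ 2) / (2 * ρ) := by
      rw [le_div_iff₀ (by positivity)]
      nlinarith
    have hle := (sqrt_sq_sub_sq_sub_mem_Icc hρ0 hf (by linarith) hhalf).1
    simp only [y, Nat.cast_zero, add_zero]
    linarith
  have hstep : ∀ k < ⌈σ⌉₊, y k - y (k + 1) < r := by
    intro k hk
    have hk' : ((k + 1 : ℕ) : ℝ) ≤ ⌈σ⌉₊ := by exact_mod_cast hk
    push_cast at hk'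
    refine (sqrt_sq_sub_sq_sub_mem_Icc hρ0 (s := f + k) (s' := f + (k + 1 : ℕ))
      (by positivity) ?_ ?_).2.trans_lt ?_ <;> push_cast
    · linarith
    · linarith
    · rw [div_lt_iff₀ hρ0]
      nlinarith
  obtain ⟨k, hk, m, hm⟩ := exists_nat_int_abs_sub_lt hdrop hstep q
  have hk' : (k : ℝ) ≤ ⌈σ⌉₊ := by exact_mod_cast hk
  exact ⟨k, m, by linarith, hm⟩

lemma eventually_exists_en_eq_add_mem_ballT2 {r : ℝ} (hr : 0 < r) :
    ∀ᶠ ρ in Filter.atTop, ∀ z x₀ : V2, ∃ u, en u = ρ ∧ z + u ∈ ballT2 x₀ r := by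
  have hsqrt : Filter.Tendsto (fun ρ : ℝ ↦ √(2 * ρ)) Filter.atTop Filter.atTop :=
    Real.tendsto_sqrt_atTop.comp (Filter.tendsto_id.const_mul_atTop two_pos)
  filter_upwards [hsqrt.eventually_ge_atTop 6, hsqrt.eventually_gt_atTop (6 / r),
    Filter.eventually_ge_atTop 0] with ρ hρ hρr hρ0 z x₀
  rw [div_lt_iff₀' hr] at hρr
  obtain ⟨k, m, hle, hlt⟩ := exists_abs_sqrt_sq_sub_sq_sub_lt hρ hρr
    (Int.fract_nonneg (x₀.1 - z.1)) (Int.fract_lt_one _) (x₀.2 - z.2)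
  set s := Int.fract (x₀.1 - z.1) + k with hs
  have hs0 : 0 ≤ s := by positivity
  refine ⟨(s, √(ρ ^ 2 - s ^ 2)), ?_, k - ⌊x₀.1 - z.1⌋, m, ?_⟩
  · rw [en, Real.sq_sqrt (by nlinarith), add_sub_cancel, Real.sqrt_sq hρ0]
  · have hfst : z.1 + s - (x₀.1 + ((k - ⌊x₀.1 - z.1⌋ : ℤ) : ℝ)) = 0 := by
      rw [hs, Int.fract]
      push_cast
      ring
    simp only [en, Prod.fst_add, Prod.snd_add, hfst]
    rw [zero_pow two_ne_zero, zero_add, Real.sqrt_sq_eq_abs]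
    convert hlt using 2
    ring

/-! ### Motion in a constant magnetic field -/

lemma en_smul (a : ℝ) (v : V2) : en (a • v) = |a| * en v := by
  rw [← Real.sqrt_sq_eq_abs, en, en, ← Real.sqrt_mul (sq_nonneg a)]
  simp only [Prod.smul_fst, Prod.smul_snd, smul_eq_mul]
  ring_nf

lemma en_pperp (v : V2) : en (pperp v) = en v := by
  simp only [en, pperp, even_two, Even.neg_pow, add_comm]

lemma norm_le_en (v : V2) : ‖v‖ ≤ en v := by
  rw [Prod.norm_def, max_le_iff, Real.norm_eq_abs, Real.norm_eq_abs]
  exact ⟨Real.abs_le_sqrt (by nlinarith [sq_nonneg v.2]),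
    Real.abs_le_sqrt (by nlinarith [sq_nonneg v.1])⟩

/-- The map `v ↦ v⊥` as a continuous linear map. -/
def pperpL : V2 →L[ℝ] V2 := (ContinuousLinearMap.snd ℝ ℝ ℝ).prod (-ContinuousLinearMap.fst ℝ ℝ ℝ)

lemma pperp_pperp (v : V2) : pperp (pperp v) = -v := rfl

lemma pperp_smul (a : ℝ) (v : V2) : pperp (a • v) = a • pperp v := map_smul pperpL a v

lemma pperp_sub (v w : V2) : pperp (v - w) = pperp v - pperp w := map_sub pperpL v w

lemma norm_pperp (v : V2) : ‖pperp v‖ = ‖v‖ := by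
  simp [pperp, Prod.norm_def, max_comm]

lemma along_pperp_self (v : V2) : along v (pperp v) = 0 := by
  rw [along_apply, pperp]
  ring

/-- The rotation of angle `-θ`; it is clockwise because `v ↦ v⊥` is. -/
def rot (θ : ℝ) (v : V2) : V2 := cos θ • v + sin θ • pperp v

lemma rot_periodic (v : V2) : Function.Periodic (fun θ ↦ rot θ v) (2 * π) := fun θ ↦ by
  simp only [rot, Real.cos_add_two_pi, Real.sin_add_two_pi]

lemma rot_rot_neg (θ : ℝ) (v : V2) : rot θ (rot (-θ) v) = v := by
  ext <;> simp only [rot, pperp, cos_neg, sin_neg, Prod.fst_add, Prod.snd_add, Prod.smul_fst,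
    Prod.smul_snd, smul_eq_mul]
  · linear_combination v.1 * Real.sin_sq_add_cos_sq θ
  · linear_combination v.2 * Real.sin_sq_add_cos_sq θ

lemma norm_rot_sub_le (θ : ℝ) (v : V2) : ‖rot θ v - v‖ ≤ 2 * |θ| * ‖v‖ := by
  have hcos : |cos θ - 1| ≤ |θ| := by simpa using Real.abs_cos_sub_cos_le θ 0
  calc ‖rot θ v - v‖ = ‖(cos θ - 1) • v + sin θ • pperp v‖ := by
        rw [rot, sub_smul, one_smul]
        abel_nf
    _ ≤ |cos θ - 1| * ‖v‖ + |sin θ| * ‖v‖ := by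
        refine (norm_add_le _ _).trans_eq ?_
        rw [norm_smul, norm_smul, norm_pperp, Real.norm_eq_abs, Real.norm_eq_abs]
    _ ≤ |θ| * ‖v‖ + |θ| * ‖v‖ :=
        add_le_add (mul_le_mul_of_nonneg_right hcos (norm_nonneg v))
          (mul_le_mul_of_nonneg_right Real.abs_sin_le_abs (norm_nonneg v))
    _ = 2 * |θ| * ‖v‖ := by ring

lemma exists_eq_en_smul_cos_sin (v : V2) : ∃ α, v = en v • (cos α, sin α) := by
  have hnorm : ‖(⟨v.1, v.2⟩ : ℂ)‖ = en v := Complex.norm_eq_sqrt_sq_add_sq _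
  refine ⟨Complex.arg ⟨v.1, v.2⟩, Prod.ext ?_ ?_⟩
  · simpa [hnorm] using (Complex.norm_mul_cos_arg ⟨v.1, v.2⟩).symm
  · simpa [hnorm] using (Complex.norm_mul_sin_arg ⟨v.1, v.2⟩).symm

lemma exists_rot_eq {v w : V2} (h : en v = en w) : ∃ θ, rot θ v = w := by
  obtain ⟨α, hα⟩ := exists_eq_en_smul_cos_sin v
  obtain ⟨β, hβ⟩ := exists_eq_en_smul_cos_sin w
  refine ⟨α - β, ?_⟩
  rw [hβ, ← h]
  conv_lhs => rw [hα]
  have hcos : cos β = cos (α - (α - β)) := by rw [sub_sub_cancel]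
  have hsin : sin β = sin (α - (α - β)) := by rw [sub_sub_cancel]
  rw [hcos, hsin, cos_sub α (α - β), sin_sub α (α - β)]
  ext <;> simp only [rot, pperp, Prod.fst_add, Prod.snd_add, Prod.smul_fst, Prod.smul_snd,
    smul_eq_mul] <;> ring

/-- The Lorentz factor `√(1+|v|²/c²)`, so that `v̂ = v / lorentz c v`. -/
def lorentz (c : ℝ) (v : V2) : ℝ := √(1 + en v ^ 2 / c ^ 2)

lemma lorentz_sq (c : ℝ) (v : V2) : lorentz c v ^ 2 = 1 + en v ^ 2 / c ^ 2 :=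
  Real.sq_sqrt (by positivity)

lemma one_le_lorentz (c : ℝ) (v : V2) : 1 ≤ lorentz c v :=
  Real.one_le_sqrt.2 (le_add_of_nonneg_right (by positivity))

lemma lorentz_pos (c : ℝ) (v : V2) : 0 < lorentz c v := one_pos.trans_le (one_le_lorentz c v)

lemma lorentz_congr (c : ℝ) {v w : V2} (h : en v = en w) : lorentz c v = lorentz c w := by
  rw [lorentz, h, lorentz]

lemma vhat_eq (c : ℝ) (v : V2) : vhat c v = (lorentz c v)⁻¹ • v := by
  rw [vhat, lorentz, en_sq, one_div]

lemma norm_vhat_le (c : ℝ) (v : V2) : ‖vhat c v‖ ≤ ‖v‖ := by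
  rw [vhat_eq, norm_smul, norm_inv, Real.norm_of_nonneg (lorentz_pos c v).le]
  exact mul_le_of_le_one_left (norm_nonneg _) (inv_le_one_of_one_le₀ (one_le_lorentz c v))

lemma lorentz_sub_one_le {M : ℝ} (c : ℝ) {v : V2} (hv : en v ≤ M) :
    lorentz c v - 1 ≤ M ^ 2 / c ^ 2 := by
  have hle : en v ^ 2 / c ^ 2 ≤ M ^ 2 / c ^ 2 := by
    have := en_nonneg v
    gcongr
  nlinarith [one_le_lorentz c v, lorentz_sq c v]

lemma one_sub_inv_lorentz_le {M : ℝ} (c : ℝ) {v : V2} (hv : en v ≤ M) :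
    1 - (lorentz c v)⁻¹ ≤ M ^ 2 / c ^ 2 := by
  have hsq : 0 ≤ (lorentz c v - 1) ^ 2 / lorentz c v :=
    div_nonneg (sq_nonneg _) (lorentz_pos c v).le
  have heq : (lorentz c v - 1) ^ 2 / lorentz c v = lorentz c v - 2 + (lorentz c v)⁻¹ := by
    have := (lorentz_pos c v).ne'
    field_simp
    ring
  linarith [lorentz_sub_one_le c hv]

lemma eq_of_hasDerivAt_zero {E : Type*} [NormedAddCommGroup E] [NormedSpace ℝ E] {f : ℝ → E}
    {a b t : ℝ} (h : ∀ t ∈ Set.Icc a b, HasDerivAt f 0 t) (ht : t ∈ Set.Icc a b) : f t = f a :=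
  constant_of_has_deriv_right_zero (fun t ht ↦ (h t ht).continuousAt.continuousWithinAt)
    (fun t ht ↦ (h t (Set.Ico_subset_Icc_self ht)).hasDerivWithinAt) t ht

/-- The period `2π/|𝔟|` of the non-relativistic motion in the magnetic field `𝔟`; the relativistic
one is longer by the Lorentz factor. -/
def cyclotronPeriod (𝔟 : ℝ) : ℝ := 2 * π / |𝔟|

lemma cyclotronPeriod_pos {𝔟 : ℝ} (h𝔟 : 𝔟 ≠ 0) : 0 < cyclotronPeriod 𝔟 :=
  div_pos two_pi_pos (abs_pos.2 h𝔟)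

/-- `(X, V)` is a relativistic trajectory, over the time set `s`, in the electric field `E` and the
constant magnetic field `𝔟`. -/
structure IsTrajectory (c 𝔟 : ℝ) (E : ℝ → V2 → V2) (s : Set ℝ) (X V : ℝ → V2) : Prop where
  position : ∀ t ∈ s, HasDerivAt X (vhat c (V t)) t
  velocity : ∀ t ∈ s, HasDerivAt V (E t (X t) + 𝔟 • pperp (vhat c (V t))) t

namespace IsTrajectory

variable {c 𝔟 a b t : ℝ} {E E' : ℝ → V2 → V2} {s s' : Set ℝ} {X V : ℝ → V2}

lemma congr (h : IsTrajectory c 𝔟 E s X V) (hs : s' ⊆ s) (hE : ∀ t ∈ s', E t = E' t) :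
    IsTrajectory c 𝔟 E' s' X V :=
  ⟨fun t ht ↦ h.position t (hs ht), fun t ht ↦ hE t ht ▸ h.velocity t (hs ht)⟩

lemma hasDerivAt_sub_pperp (h : IsTrajectory c 𝔟 E s X V) (ht : t ∈ s) :
    HasDerivAt (fun u ↦ V u - 𝔟 • pperp (X u)) (E t (X t)) t := by
  have hX : HasDerivAt (fun u ↦ pperp (X u)) (pperp (vhat c (V t))) t :=
    pperpL.hasFDerivAt.comp_hasDerivAt t (h.position t ht)
  exact ((h.velocity t ht).fun_sub (hX.fun_const_smul 𝔟)).congr_deriv (add_sub_cancel_right _ _)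

lemma hasDerivAt_en_sq (h : IsTrajectory c 𝔟 E s X V) (ht : t ∈ s) :
    HasDerivAt (fun u ↦ en (V u) ^ 2) (2 * along (V t) (E t (X t))) t := by
  simp only [en_sq]
  have hfst := (ContinuousLinearMap.fst ℝ ℝ ℝ).hasFDerivAt.comp_hasDerivAt t (h.velocity t ht)
  have hsnd := (ContinuousLinearMap.snd ℝ ℝ ℝ).hasFDerivAt.comp_hasDerivAt t (h.velocity t ht)
  refine ((hfst.fun_pow 2).fun_add (hsnd.fun_pow 2)).congr_deriv ?_
  rw [vhat_eq, pperp_smul, along_apply]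
  simp only [Function.comp_apply, ContinuousLinearMap.coe_fst', ContinuousLinearMap.coe_snd',
    Prod.fst_add, Prod.snd_add, Prod.smul_fst, Prod.smul_snd, smul_eq_mul, pperp]
  push_cast
  ring

lemma en_eq (h : IsTrajectory c 𝔟 0 (Set.Icc a b) X V) (ht : t ∈ Set.Icc a b) :
    en (V t) = en (V a) := by
  have hsq : en (V t) ^ 2 = en (V a) ^ 2 :=
    eq_of_hasDerivAt_zero (fun u hu ↦ by simpa using h.hasDerivAt_en_sq hu) ht
  exact (sq_eq_sq₀ (en_nonneg _) (en_nonneg _)).1 hsq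

lemma sub_pperp_eq (h : IsTrajectory c 𝔟 0 (Set.Icc a b) X V) (ht : t ∈ Set.Icc a b) :
    V t - 𝔟 • pperp (X t) = V a - 𝔟 • pperp (X a) :=
  eq_of_hasDerivAt_zero (fun _ hu ↦ h.hasDerivAt_sub_pperp hu) ht

lemma velocity_eq (h : IsTrajectory c 𝔟 0 (Set.Icc a b) X V) (ht : t ∈ Set.Icc a b) :
    V t = rot (𝔟 / lorentz c (V a) * (t - a)) (V a) := by
  set w := 𝔟 / lorentz c (V a)
  have hconst : ∀ u ∈ Set.Icc a b, HasDerivAt (fun u ↦ rot (-(w * (u - a))) (V u)) 0 u := by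
    intro u hu
    have hV : HasDerivAt V (w • pperp (V u)) u := by
      refine (h.velocity u hu).congr_deriv ?_
      rw [vhat_eq, lorentz_congr c (h.en_eq hu), pperp_smul, smul_smul, ← div_eq_mul_inv,
        Pi.zero_apply, Pi.zero_apply, zero_add]
    have hV' : HasDerivAt (fun u ↦ pperp (V u)) (w • pperp (pperp (V u))) u :=
      (pperpL.hasFDerivAt.comp_hasDerivAt u hV).congr_deriv (pperp_smul w _)
    have hangle : HasDerivAt (fun u ↦ -(w * (u - a))) (-w) u := by
      simpa using (((hasDerivAt_id u).sub_const a).const_mul w).fun_neg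
    refine ((hangle.cos.fun_smul hV).fun_add (hangle.sin.fun_smul hV')).congr_deriv ?_
    rw [pperp_pperp]
    module
  have hinit : rot (-(w * (t - a))) (V t) = V a := by
    simpa [rot] using eq_of_hasDerivAt_zero hconst ht
  rw [← hinit, rot_rot_neg]

lemma exists_velocity_eq (h : IsTrajectory c 𝔟 0 (Set.Icc a b) X V) (h𝔟 : 𝔟 ≠ 0) {w : V2}
    (hw : en w = en (V a)) (hab : a + lorentz c (V a) * cyclotronPeriod 𝔟 ≤ b) :
    ∃ t ∈ Set.Icc a b, V t = w := by
  obtain ⟨θ, rfl⟩ := exists_rot_eq hw.symm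
  have hγ := lorentz_pos c (V a)
  have hper : Function.Periodic (fun s ↦ rot (𝔟 / lorentz c (V a) * s) (V a))
      (lorentz c (V a) * cyclotronPeriod 𝔟) := by
    have hper' := (rot_periodic (V a)).const_mul (𝔟 / lorentz c (V a))
    rw [inv_div] at hper'
    rw [cyclotronPeriod]
    rcases abs_choice 𝔟 with h | h <;> rw [h]
    · exact (by ring : lorentz c (V a) / 𝔟 * (2 * π) = lorentz c (V a) * (2 * π / 𝔟)) ▸ hper'
    · rw [div_neg, mul_neg]
      exact (by ring : lorentz c (V a) / 𝔟 * (2 * π) = lorentz c (V a) * (2 * π / 𝔟)) ▸ hper'.neg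
  obtain ⟨s, ⟨hs, hs'⟩, heq⟩ := hper.exists_mem_Ico₀
    (mul_pos hγ (cyclotronPeriod_pos h𝔟)) (θ * lorentz c (V a) / 𝔟)
  have ht : a + s ∈ Set.Icc a b := ⟨by linarith, by linarith⟩
  refine ⟨a + s, ht, ?_⟩
  rw [h.velocity_eq ht, add_sub_cancel_left, ← heq]
  field_simp

/-- The Larmor circle of a fast particle is large, hence almost dense in the torus. -/
lemma exists_mem_ballT2 (h : IsTrajectory c 𝔟 0 (Set.Icc a b) X V) (h𝔟 : 𝔟 ≠ 0) {r : ℝ} {x₀ : V2}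
    (hcircle : ∀ z : V2, ∃ u, en u = en (V a) / |𝔟| ∧ z + u ∈ ballT2 x₀ r)
    (hab : a + lorentz c (V a) * cyclotronPeriod 𝔟 ≤ b) :
    ∃ t ∈ Set.Icc a b, X t ∈ ballT2 x₀ r := by
  obtain ⟨u, hu, hmem⟩ := hcircle (𝔟⁻¹ • pperp (V a - 𝔟 • pperp (X a)))
  obtain ⟨t, ht, hVt⟩ := h.exists_velocity_eq h𝔟 (w := 𝔟 • pperp u)
    (by rw [en_smul, en_pperp, hu, mul_div_cancel₀ _ (abs_ne_zero.2 h𝔟)]) hab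
  refine ⟨t, ht, ?_⟩
  rwa [← h.sub_pperp_eq ht, hVt, ← smul_sub, pperp_smul, inv_smul_smul₀ h𝔟, pperp_sub,
    pperp_pperp, pperp_pperp, sub_neg_eq_add, neg_add_cancel_comm] at hmem

/-- The cyclotron period `2πγ/|𝔟|` is close to its non-relativistic value `2π/|𝔟|`, after which a
particle would be back at its starting point. -/
lemma norm_sub_le_of_periods (h : IsTrajectory c 𝔟 0 (Set.Icc a b) X V) (h𝔟 : 𝔟 ≠ 0) (n : ℕ)
    (hb : b = a + n * cyclotronPeriod 𝔟) {M : ℝ} (hM : en (V a) ≤ M) :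
    ‖X b - X a‖ ≤ 4 * π * n * M ^ 3 / (|𝔟| * c ^ 2) := by
  rw [cyclotronPeriod] at hb
  have hbmem : b ∈ Set.Icc a b := ⟨hb ▸ le_add_of_nonneg_right (by positivity), le_rfl⟩
  have : 0 ≤ M := (en_nonneg _).trans hM
  obtain ⟨k, hk⟩ : ∃ k : ℤ, 𝔟 * (b - a) = k * (2 * π) := by
    rw [hb, add_sub_cancel_left]
    rcases abs_choice 𝔟 with h | h <;> rw [h]
    exacts [⟨n, by field_simp; norm_cast⟩, ⟨-n, by push_cast; field_simp⟩]
  have hangle : |𝔟 / lorentz c (V a) * (b - a) - k * (2 * π)| ≤ n * (2 * π) * (M ^ 2 / c ^ 2) := by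
    calc |𝔟 / lorentz c (V a) * (b - a) - k * (2 * π)|
        = |𝔟 * (b - a)| * |1 - (lorentz c (V a))⁻¹| := by
          rw [← hk, ← abs_mul, ← abs_neg]
          ring_nf
      _ = n * (2 * π) * (1 - (lorentz c (V a))⁻¹) := by
          rw [abs_of_nonneg (sub_nonneg.2 (inv_le_one_of_one_le₀ (one_le_lorentz c _))), abs_mul,
            hb, add_sub_cancel_left, abs_of_nonneg (a := n * (2 * π / |𝔟|)) (by positivity)]
          field_simp
      _ ≤ n * (2 * π) * (M ^ 2 / c ^ 2) := by
          gcongr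
          exact one_sub_inv_lorentz_le c hM
  have hV : ‖V b - V a‖ ≤ 2 * (n * (2 * π) * (M ^ 2 / c ^ 2)) * M := by
    rw [h.velocity_eq hbmem, ← (rot_periodic (V a)).sub_int_mul_eq k]
    refine (norm_rot_sub_le _ _).trans ?_
    gcongr
    exact (norm_le_en _).trans hM
  have hX : |𝔟| * ‖X b - X a‖ = ‖V b - V a‖ := by
    rw [← norm_pperp, ← Real.norm_eq_abs, ← norm_smul, pperp_sub, smul_sub,
      ← sub_eq_sub_iff_sub_eq_sub.1 (h.sub_pperp_eq hbmem)]
  rw [← div_div, div_right_comm, le_div_iff₀' (by positivity), hX]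
  exact hV.trans_eq (by ring)

end IsTrajectory

/-! ### Kicks -/

/-- A smooth nonnegative function of time, of integral `1`, supported in `[a, a + τ]`. -/
def pulse (a τ t : ℝ) : ℝ := deriv Real.smoothTransition ((t - a) / τ) / τ

lemma contDiff_pulse (a τ : ℝ) : ContDiff ℝ (⊤ : ℕ∞) (pulse a τ) :=
  ((contDiff_infty_iff_deriv.1 Real.smoothTransition.contDiff).2.comp (by fun_prop)).div_const τ

lemma hasDerivAt_smoothTransition_div (a τ t : ℝ) :
    HasDerivAt (fun u ↦ Real.smoothTransition ((u - a) / τ)) (pulse a τ t) t := by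
  have hdiff : DifferentiableAt ℝ Real.smoothTransition ((t - a) / τ) :=
    (Real.smoothTransition.contDiff.differentiable one_ne_zero).differentiableAt
  refine (hdiff.hasDerivAt.comp t (((hasDerivAt_id t).sub_const a).div_const τ)).congr_deriv ?_
  rw [pulse, mul_one_div]

lemma deriv_smoothTransition_eq_zero {x : ℝ} (hx : x ∉ Set.Ioo 0 1) :
    deriv Real.smoothTransition x = 0 := by
  rw [Set.mem_Ioo, not_and_or, not_lt, not_lt] at hx
  rcases hx with hx | hx
  · refine IsLocalMin.deriv_eq_zero (.of_forall fun u ↦ ?_)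
    rw [Real.smoothTransition.zero_of_nonpos hx]
    exact Real.smoothTransition.nonneg u
  · refine IsLocalMax.deriv_eq_zero (.of_forall fun u ↦ ?_)
    rw [Real.smoothTransition.one_of_one_le hx]
    exact Real.smoothTransition.le_one u

section Pulse

variable {a τ t : ℝ} (hτ : 0 < τ)
include hτ

lemma pulse_nonneg (a t : ℝ) : 0 ≤ pulse a τ t :=
  div_nonneg Real.smoothTransition.monotone.deriv_nonneg hτ.le

lemma pulse_eq_zero (ht : t ∉ Set.Ioo a (a + τ)) : pulse a τ t = 0 := by
  rw [pulse, deriv_smoothTransition_eq_zero, zero_div]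
  rwa [Set.mem_Ioo, div_pos_iff_of_pos_right hτ, sub_pos, div_lt_one hτ, sub_lt_iff_lt_add']

lemma deriv_pulse_eq_zero (ht : t ∉ Set.Ioo a (a + τ)) : deriv (pulse a τ) t = 0 := by
  refine IsLocalMin.deriv_eq_zero (.of_forall fun u ↦ ?_)
  rw [pulse_eq_zero hτ ht]
  exact pulse_nonneg hτ a u

end Pulse

lemma along_le (v w : V2) : along v w ≤ 2 * (‖v‖ * ‖w‖) := by
  have hfst : v.1 * w.1 ≤ ‖v‖ * ‖w‖ := (le_abs_self _).trans <| abs_mul v.1 w.1 ▸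
    mul_le_mul (norm_fst_le v) (norm_fst_le w) (abs_nonneg _) (norm_nonneg _)
  have hsnd : v.2 * w.2 ≤ ‖v‖ * ‖w‖ := (le_abs_self _).trans <| abs_mul v.2 w.2 ▸
    mul_le_mul (norm_snd_le v) (norm_snd_le w) (abs_nonneg _) (norm_nonneg _)
  rw [along_apply]
  linarith

lemma en_le_lorentz_one (v : V2) : en v ≤ lorentz 1 v :=
  Real.le_sqrt_of_sq_le (by linarith)

lemma lorentz_one_le (v : V2) : lorentz 1 v ≤ en v + 1 :=
  Real.sqrt_le_iff.2 ⟨by linarith [en_nonneg v], by nlinarith [en_nonneg v]⟩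

namespace IsTrajectory

variable {c 𝔟 a τ t C M : ℝ} {L : NNReal} {E : ℝ → V2 → V2} {g : V2 → V2} {s : Set ℝ}
  {X V : ℝ → V2}

lemma hasDerivAt_lorentz_one (h : IsTrajectory c 𝔟 E s X V) (ht : t ∈ s) :
    HasDerivAt (fun u ↦ lorentz 1 (V u)) (along (V t) (E t (X t)) / lorentz 1 (V t)) t := by
  refine ((((h.hasDerivAt_en_sq ht).div_const (1 ^ 2)).const_add 1).sqrt
    (by positivity)).congr_deriv ?_
  rw [one_pow, div_one, mul_div_mul_left _ _ two_ne_zero, lorentz, one_pow]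

lemma norm_position_sub_le (h : IsTrajectory c 𝔟 E (Set.Icc a (a + τ)) X V) {S : ℝ}
    (hS : ∀ t ∈ Set.Icc a (a + τ), en (V t) ≤ S) (ht : t ∈ Set.Icc a (a + τ)) :
    ‖X t - X a‖ ≤ S * τ := by
  have hspeed : ∀ u ∈ Set.Ico a (a + τ), ‖vhat c (V u)‖ ≤ S := fun u hu ↦
    ((norm_vhat_le c _).trans (norm_le_en _)).trans (hS u (Set.Ico_subset_Icc_self hu))
  have : 0 ≤ S := (en_nonneg _).trans (hS t ht)
  refine (norm_image_sub_le_of_norm_deriv_le_segment'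
    (fun u hu ↦ (h.position u hu).hasDerivWithinAt) hspeed t ht).trans ?_
  gcongr
  linarith [ht.2]

section Kick

variable (h : IsTrajectory c 𝔟 (fun t y ↦ pulse a τ t • g y) (Set.Icc a (a + τ)) X V) (hτ : 0 < τ)
include h hτ

lemma en_le_of_kick (hC : ∀ x, ‖g x‖ ≤ C) (ht : t ∈ Set.Icc a (a + τ)) :
    en (V t) ≤ en (V a) + 1 + 2 * C := by
  have : 0 ≤ C := (norm_nonneg _).trans (hC 0)
  have hbarrier : ∀ u, HasDerivAt
      (fun u ↦ lorentz 1 (V a) + 2 * C * Real.smoothTransition ((u - a) / τ))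
      (2 * C * pulse a τ u) u := fun u ↦
    ((hasDerivAt_smoothTransition_div a τ u).const_mul (2 * C)).const_add _
  have hrate : ∀ u, along (V u) (pulse a τ u • g (X u)) / lorentz 1 (V u) ≤
      2 * C * pulse a τ u := fun u ↦ by
    have hV : ‖V u‖ ≤ lorentz 1 (V u) := (norm_le_en _).trans (en_le_lorentz_one _)
    have hp := pulse_nonneg hτ a u
    rw [div_le_iff₀ (lorentz_pos 1 _)]
    calc along (V u) (pulse a τ u • g (X u)) ≤ pulse a τ u * (2 * (‖V u‖ * ‖g (X u)‖)) := by
          rw [map_smul, smul_eq_mul]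
          exact mul_le_mul_of_nonneg_left (along_le _ _) hp
      _ ≤ pulse a τ u * (2 * (lorentz 1 (V u) * C)) := by
          gcongr
          exacts [(lorentz_pos 1 _).le, hC _]
      _ = 2 * C * pulse a τ u * lorentz 1 (V u) := by ring
  have hle := image_le_of_deriv_right_le_deriv_boundary
    (fun u hu ↦ (h.hasDerivAt_lorentz_one hu).continuousAt.continuousWithinAt)
    (fun u hu ↦ (h.hasDerivAt_lorentz_one (Set.Ico_subset_Icc_self hu)).hasDerivWithinAt)
    (by simp [Real.smoothTransition.zero])
    (fun u _ ↦ (hbarrier u).continuousAt.continuousWithinAt)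
    (fun u _ ↦ (hbarrier u).hasDerivWithinAt) (fun u _ ↦ hrate u) ht
  have htransition : 2 * C * Real.smoothTransition ((t - a) / τ) ≤ 2 * C :=
    mul_le_of_le_one_right (by positivity) (Real.smoothTransition.le_one _)
  linarith [en_le_lorentz_one (V t), lorentz_one_le (V a)]

lemma norm_velocity_sub_le (hL : LipschitzWith L g) {S : ℝ}
    (hS : ∀ t ∈ Set.Icc a (a + τ), en (V t) ≤ S) :
    ‖V (a + τ) - V a - g (X a)‖ ≤ (L + |𝔟|) * (S * τ) := by
  have hend : a + τ ∈ Set.Icc a (a + τ) := ⟨by linarith, le_rfl⟩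
  let D : ℝ → V2 := fun t ↦ V t - 𝔟 • pperp (X t) - (V a - 𝔟 • pperp (X a)) -
    Real.smoothTransition ((t - a) / τ) • g (X a)
  have hD : ∀ t ∈ Set.Icc a (a + τ), HasDerivAt D (pulse a τ t • (g (X t) - g (X a))) t :=
    fun t ht ↦ (((h.hasDerivAt_sub_pperp ht).sub_const _).fun_sub
      ((hasDerivAt_smoothTransition_div a τ t).smul_const _)).congr_deriv (smul_sub _ _ _).symm
  have hbarrier : ∀ u, HasDerivAt
      (fun u ↦ L * (S * τ) * Real.smoothTransition ((u - a) / τ)) (L * (S * τ) * pulse a τ u) u :=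
    fun u ↦ (hasDerivAt_smoothTransition_div a τ u).const_mul _
  have hrate : ∀ u ∈ Set.Icc a (a + τ),
      ‖pulse a τ u • (g (X u) - g (X a))‖ ≤ L * (S * τ) * pulse a τ u := fun u hu ↦ by
    rw [norm_smul, Real.norm_of_nonneg (pulse_nonneg hτ a u), mul_comm]
    refine mul_le_mul_of_nonneg_right ((hL.norm_sub_le _ _).trans ?_) (pulse_nonneg hτ a u)
    gcongr
    exact h.norm_position_sub_le hS hu
  have hDend : ‖D (a + τ)‖ ≤ L * (S * τ) := by
    refine (image_norm_le_of_norm_deriv_right_le_deriv_boundary'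
      (fun u hu ↦ (hD u hu).continuousAt.continuousWithinAt)
      (fun u hu ↦ (hD u (Set.Ico_subset_Icc_self hu)).hasDerivWithinAt)
      (by simp [D, Real.smoothTransition.zero])
      (fun u _ ↦ (hbarrier u).continuousAt.continuousWithinAt)
      (fun u _ ↦ (hbarrier u).hasDerivWithinAt)
      (fun u hu ↦ hrate u (Set.Ico_subset_Icc_self hu)) hend).trans_eq ?_
    rw [add_sub_cancel_left, div_self hτ.ne', Real.smoothTransition.one, mul_one]
  calc ‖V (a + τ) - V a - g (X a)‖ = ‖D (a + τ) + 𝔟 • pperp (X (a + τ) - X a)‖ := by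
        simp only [D, add_sub_cancel_left, div_self hτ.ne', Real.smoothTransition.one, pperp_sub]
        congr 1
        module
    _ ≤ L * (S * τ) + |𝔟| * (S * τ) := by
        refine (norm_add_le _ _).trans (add_le_add hDend ?_)
        rw [norm_smul, norm_pperp, Real.norm_eq_abs]
        exact mul_le_mul_of_nonneg_left (h.norm_position_sub_le hS hend) (abs_nonneg _)
    _ = (L + |𝔟|) * (S * τ) := by ring

lemma kick_estimates (hC : ∀ x, ‖g x‖ ≤ C) (hL : LipschitzWith L g) (hM : en (V a) ≤ M)
    (hsmall : (L + |𝔟|) * ((M + 1 + 2 * C) * τ) ≤ 1) :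
    en (V (a + τ)) ≤ M + 1 + 2 * C ∧ ‖X (a + τ) - X a‖ ≤ (M + 1 + 2 * C) * τ ∧
      ‖g (X a)‖ ≤ en (V (a + τ)) + M + 1 := by
  have hS : ∀ t ∈ Set.Icc a (a + τ), en (V t) ≤ M + 1 + 2 * C := fun t ht ↦
    (h.en_le_of_kick hτ hC ht).trans (by linarith)
  have hend : a + τ ∈ Set.Icc a (a + τ) := ⟨by linarith, le_rfl⟩
  refine ⟨hS _ hend, h.norm_position_sub_le hS hend, ?_⟩
  calc ‖g (X a)‖ = ‖V (a + τ) - V a - (V (a + τ) - V a - g (X a))‖ := by rw [sub_sub_cancel]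
    _ ≤ ‖V (a + τ)‖ + ‖V a‖ + ‖V (a + τ) - V a - g (X a)‖ :=
        (norm_sub_le _ _).trans (add_le_add_left (norm_sub_le _ _) _)
    _ ≤ en (V (a + τ)) + M + 1 :=
        add_le_add (add_le_add (norm_le_en _) ((norm_le_en _).trans hM))
          ((h.norm_velocity_sub_le hτ hL hS).trans hsmall)

end Kick

end IsTrajectory

section Fast

variable {c 𝔟 τ C M m r : ℝ} {L : NNReal} {E : ℝ → V2 → V2} {g₁ g₂ : V2 → V2} {X V : ℝ → V2}

/-- The superposition of two modes `W₁`, `W₂` with time-dependent amplitudes `η₁`, `η₂`. -/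
def twoMode {F : Type*} [AddCommGroup F] [Module ℝ F] (η₁ η₂ : ℝ → ℝ) (W₁ W₂ : V2 → F)
    (p : ℝ × V2) : F :=
  η₁ p.1 • W₁ p.2 + η₂ p.1 • W₂ p.2

/-- The field which kicks along `g₁` after one cyclotron period, and along `g₂` two periods
later; both kicks last `τ`. -/
def kickField (𝔟 τ : ℝ) (g₁ g₂ : V2 → V2) (t : ℝ) (x : V2) : V2 :=
  twoMode (pulse (cyclotronPeriod 𝔟) τ) (pulse (3 * cyclotronPeriod 𝔟 + τ) τ) g₁ g₂ (t, x)

lemma IsTrajectory.exists_visit {s S : ℝ} {x₀ : V2} (h𝔟 : 𝔟 ≠ 0)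
    (h : IsTrajectory c 𝔟 0 (Set.Icc s (s + 2 * cyclotronPeriod 𝔟)) X V)
    (hcircle : ∀ ρ ≥ M / |𝔟|, ∀ z, ∃ u, en u = ρ ∧ z + u ∈ ballT2 x₀ r)
    (hMV : M ≤ en (V s)) (hVS : en (V s) ≤ S) (hS : 0 < S) (hSc : S ≤ c) :
    ∃ t ∈ Set.Icc s (s + 2 * cyclotronPeriod 𝔟), X t ∈ ballT2 x₀ r ∧ M ≤ en (V t) := by
  have hγ : lorentz c (V s) ≤ 2 := by
    have : S ^ 2 / c ^ 2 ≤ 1 := div_le_one_of_le₀ (by gcongr) (sq_nonneg c)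
    linarith [lorentz_sub_one_le c hVS]
  have hP := cyclotronPeriod_pos h𝔟
  obtain ⟨t, ht, hmem⟩ := h.exists_mem_ballT2 h𝔟
    (hcircle _ (div_le_div_of_nonneg_right hMV (abs_nonneg 𝔟))) (by gcongr)
  exact ⟨t, ht, hmem, hMV.trans_eq (h.en_eq ht).symm⟩

section KickField

variable (hτ : 0 < τ) {t : ℝ}
include hτ

lemma kickField_of_le (ht : t ≤ 3 * cyclotronPeriod 𝔟 + τ) :
    kickField 𝔟 τ g₁ g₂ t = fun y ↦ pulse (cyclotronPeriod 𝔟) τ t • g₁ y := by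
  ext1 y
  rw [kickField, twoMode, pulse_eq_zero (a := 3 * cyclotronPeriod 𝔟 + τ) hτ fun h ↦ h.1.not_ge ht,
    zero_smul, add_zero]

lemma kickField_of_ge (ht : cyclotronPeriod 𝔟 + τ ≤ t) :
    kickField 𝔟 τ g₁ g₂ t = fun y ↦ pulse (3 * cyclotronPeriod 𝔟 + τ) τ t • g₂ y := by
  ext1 y
  rw [kickField, twoMode, pulse_eq_zero (a := cyclotronPeriod 𝔟) hτ fun h ↦ h.2.not_ge ht,
    zero_smul, zero_add]

lemma kickField_eq_zero
    (ht₁ : t ∉ Set.Ioo (cyclotronPeriod 𝔟) (cyclotronPeriod 𝔟 + τ))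
    (ht₂ : t ∉ Set.Ioo (3 * cyclotronPeriod 𝔟 + τ) (3 * cyclotronPeriod 𝔟 + τ + τ)) :
    kickField 𝔟 τ g₁ g₂ t = 0 := by
  ext1 y
  rw [kickField, twoMode, pulse_eq_zero hτ ht₁, pulse_eq_zero hτ ht₂, zero_smul, zero_smul,
    add_zero, Pi.zero_apply]

end KickField

lemma IsTrajectory.kickField_phases (h : IsTrajectory c 𝔟 (kickField 𝔟 τ g₁ g₂) Set.univ X V)
    (h𝔟 : 𝔟 ≠ 0) (hτ : 0 < τ) :
    IsTrajectory c 𝔟 0 (Set.Icc 0 (cyclotronPeriod 𝔟)) X V ∧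
      IsTrajectory c 𝔟 (fun t y ↦ pulse (cyclotronPeriod 𝔟) τ t • g₁ y)
        (Set.Icc (cyclotronPeriod 𝔟) (cyclotronPeriod 𝔟 + τ)) X V ∧
      IsTrajectory c 𝔟 0 (Set.Icc (cyclotronPeriod 𝔟 + τ) (3 * cyclotronPeriod 𝔟 + τ)) X V ∧
      IsTrajectory c 𝔟 (fun t y ↦ pulse (3 * cyclotronPeriod 𝔟 + τ) τ t • g₂ y)
        (Set.Icc (3 * cyclotronPeriod 𝔟 + τ) (3 * cyclotronPeriod 𝔟 + τ + τ)) X V := by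
  have := cyclotronPeriod_pos h𝔟
  refine ⟨h.congr (Set.subset_univ _) fun t ht ↦ ?_, h.congr (Set.subset_univ _) fun t ht ↦ ?_,
    h.congr (Set.subset_univ _) fun t ht ↦ ?_, h.congr (Set.subset_univ _) fun t ht ↦ ?_⟩
  · exact kickField_eq_zero hτ (fun h ↦ h.1.not_ge ht.2) fun h ↦ h.1.not_ge (by linarith [ht.2])
  · exact kickField_of_le hτ (by linarith [ht.2])
  · exact kickField_eq_zero hτ (fun h ↦ h.2.not_ge ht.1) fun h ↦ h.1.not_ge ht.2
  · exact kickField_of_ge hτ (by linarith [ht.1])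

/-- A particle left slow by the first kick is brought back, two periods later, close to a point
where the first field is weak, hence where the second one is strong. -/
lemma IsTrajectory.exists_fast (h : IsTrajectory c 𝔟 (kickField 𝔟 τ g₁ g₂) Set.univ X V)
    (h𝔟 : 𝔟 ≠ 0) (hτ : 0 < τ) (hC₁ : ∀ x, ‖g₁ x‖ ≤ C) (hC₂ : ∀ x, ‖g₂ x‖ ≤ C)
    (hL₁ : LipschitzWith L g₁) (hL₂ : LipschitzWith L g₂)
    (hA : ∀ x, 2 * M + 3 ≤ ‖g₁ x‖ ∨ 2 * M + 3 ≤ ‖g₂ x‖)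
    (hsmall : (L + |𝔟|) * ((M + 1 + 2 * C) * τ) ≤ 1)
    (hreturn : L * (8 * π * M ^ 3 / (|𝔟| * c ^ 2)) ≤ 1) (hM : en (V 0) ≤ M) :
    ∃ s, (s = cyclotronPeriod 𝔟 + τ ∨ s = 3 * cyclotronPeriod 𝔟 + τ + τ) ∧
      M ≤ en (V s) ∧ en (V s) ≤ M + 1 + 2 * C := by
  have hP := cyclotronPeriod_pos h𝔟
  obtain ⟨hfree₁, hkick₁, hfree₂, hkick₂⟩ := h.kickField_phases h𝔟 hτ
  set P := cyclotronPeriod 𝔟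
  have hM₁ : en (V P) ≤ M := (hfree₁.en_eq ⟨hP.le, le_rfl⟩).trans_le hM
  obtain ⟨hspeed₁, hmove₁, hfast₁⟩ := hkick₁.kick_estimates hτ hC₁ hL₁ hM₁ hsmall
  rcases le_or_gt M (en (V (P + τ))) with hfast | hslow
  · exact ⟨P + τ, Or.inl rfl, hfast, hspeed₁⟩
  have hM₂ : en (V (3 * P + τ)) ≤ M :=
    (hfree₂.en_eq ⟨by linarith, le_rfl⟩).trans_le hslow.le
  obtain ⟨hspeed₂, -, hfast₂⟩ := hkick₂.kick_estimates hτ hC₂ hL₂ hM₂ hsmall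
  refine ⟨3 * P + τ + τ, Or.inr rfl, ?_, hspeed₂⟩
  have hstrong : 2 * M + 3 ≤ ‖g₂ (X P)‖ := (hA (X P)).resolve_left fun hstrong ↦ by linarith
  have hback : ‖X (3 * P + τ) - X (P + τ)‖ ≤ 8 * π * M ^ 3 / (|𝔟| * c ^ 2) := by
    refine (hfree₂.norm_sub_le_of_periods h𝔟 2 ?_ hslow.le).trans_eq ?_ <;> push_cast <;> ring
  have hmove : ‖X P - X (3 * P + τ)‖ ≤
      (M + 1 + 2 * C) * τ + 8 * π * M ^ 3 / (|𝔟| * c ^ 2) := by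
    rw [norm_sub_rev, ← sub_add_sub_cancel _ (X (P + τ)), add_comm]
    exact (norm_add_le _ _).trans (add_le_add hmove₁ hback)
  have hdrop : ‖g₂ (X P)‖ - ‖g₂ (X (3 * P + τ))‖ ≤ 2 := by
    have hsmall' : L * ((M + 1 + 2 * C) * τ) ≤ 1 := le_trans
      (mul_le_mul_of_nonneg_right (le_add_of_nonneg_right (abs_nonneg 𝔟))
        ((norm_nonneg _).trans hmove₁)) hsmall
    calc ‖g₂ (X P)‖ - ‖g₂ (X (3 * P + τ))‖ ≤ L * ‖X P - X (3 * P + τ)‖ :=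
          (norm_sub_norm_le _ _).trans (hL₂.norm_sub_le _ _)
      _ ≤ L * ((M + 1 + 2 * C) * τ + 8 * π * M ^ 3 / (|𝔟| * c ^ 2)) := by gcongr
      _ ≤ 2 := by linarith
  linarith

lemma IsTrajectory.exists_fast_visit {x₀ : V2}
    (h : IsTrajectory c 𝔟 (kickField 𝔟 τ g₁ g₂) Set.univ X V) (h𝔟 : 𝔟 ≠ 0)
    (hτ : 0 < τ) (hτP : τ ≤ cyclotronPeriod 𝔟)
    (hcircle : ∀ ρ ≥ M / |𝔟|, ∀ z, ∃ u, en u = ρ ∧ z + u ∈ ballT2 x₀ r)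
    (hfast : ∃ s, (s = cyclotronPeriod 𝔟 + τ ∨ s = 3 * cyclotronPeriod 𝔟 + τ + τ) ∧
      M ≤ en (V s) ∧ en (V s) ≤ C) (hC : 0 < C) (hCc : C ≤ c) :
    ∃ t ∈ Set.Icc (cyclotronPeriod 𝔟) (8 * cyclotronPeriod 𝔟),
      X t ∈ ballT2 x₀ r ∧ M ≤ en (V t) := by
  obtain ⟨s, hs, hMV, hVC⟩ := hfast
  have := cyclotronPeriod_pos h𝔟
  have hfree : IsTrajectory c 𝔟 0 (Set.Icc s (s + 2 * cyclotronPeriod 𝔟)) X V := by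
    refine h.congr (Set.subset_univ _) fun t ht ↦ ?_
    rcases hs with rfl | rfl
    · exact kickField_eq_zero hτ (fun h ↦ h.2.not_ge ht.1) fun h ↦ h.1.not_ge (by linarith [ht.2])
    · exact kickField_eq_zero hτ (fun h ↦ h.2.not_ge (by linarith [ht.1])) fun h ↦ h.2.not_ge ht.1
  obtain ⟨t, ht, hvisit⟩ := hfree.exists_visit h𝔟 hcircle hMV hVC hC hCc
  exact ⟨t, by rcases hs with rfl | rfl <;> constructor <;> linarith [ht.1, ht.2], hvisit⟩

lemma exists_kick_duration_and_speed_of_light {𝔟 P : ℝ} (h𝔟 : 𝔟 ≠ 0) (hP : 0 < P) (L : NNReal)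
    {M C : ℝ} (hM : 0 ≤ M) (hC : 0 ≤ C) :
    ∃ τ c₀ : ℝ, 0 < τ ∧ τ ≤ P ∧ (L + |𝔟|) * ((M + 1 + 2 * C) * τ) ≤ 1 ∧ 0 < c₀ ∧
      ∀ c ≥ c₀, M + 1 + 2 * C ≤ c ∧ L * (8 * π * M ^ 3 / (|𝔟| * c ^ 2)) ≤ 1 := by
  have := abs_pos.2 h𝔟
  refine ⟨min P (1 / ((L + |𝔟|) * (M + 1 + 2 * C))),
    M + 1 + 2 * C + L * (8 * π * M ^ 3 / |𝔟|), by positivity, min_le_left _ _, ?_,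
    by positivity, fun c hc ↦ ?_⟩
  · rw [← mul_assoc, ← le_div_iff₀' (by positivity)]
    exact min_le_right _ _
  · have hK : 0 ≤ L * (8 * π * M ^ 3 / |𝔟|) := by positivity
    have hc₁ : 1 ≤ c := by linarith
    refine ⟨by linarith, ?_⟩
    rw [← div_div, ← mul_div_assoc, div_le_one (by positivity)]
    nlinarith

/-- The speed threshold beyond which Larmor circles meet every ball of radius `r` fixes the
required amplitude, before the fields are chosen. -/
lemma exists_kick_amplitude (h𝔟 : 𝔟 ≠ 0) (hr : 0 < r) (R m : ℝ) :
    ∃ A : ℝ, ∀ (g₁ g₂ : V2 → V2) (C : ℝ) (L : NNReal), (∀ x, ‖g₁ x‖ ≤ C) → (∀ x, ‖g₂ x‖ ≤ C) →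
      LipschitzWith L g₁ → LipschitzWith L g₂ → (∀ x, A ≤ ‖g₁ x‖ ∨ A ≤ ‖g₂ x‖) →
      ∃ τ c₀ : ℝ, 0 < τ ∧ τ ≤ cyclotronPeriod 𝔟 ∧ 0 < c₀ ∧ ∀ c ≥ c₀, ∀ (x₀ : V2) (X V : ℝ → V2),
        IsTrajectory c 𝔟 (kickField 𝔟 τ g₁ g₂) Set.univ X V → en (V 0) ≤ R →
        ∃ t ∈ Set.Icc (cyclotronPeriod 𝔟) (8 * cyclotronPeriod 𝔟),
          X t ∈ ballT2 x₀ r ∧ m ≤ en (V t) := by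
  obtain ⟨ρ₀, hρ₀⟩ := Filter.eventually_atTop.1 (eventually_exists_en_eq_add_mem_ballT2 hr)
  obtain ⟨M, hρM, hRM, hmM, hM⟩ : ∃ M, |𝔟| * ρ₀ ≤ M ∧ R ≤ M ∧ m ≤ M ∧ 0 ≤ M := by
    refine ⟨max (max (|𝔟| * ρ₀) R) (max m 0), ?_, ?_, ?_, ?_⟩ <;> simp only [le_max_iff, le_refl,
      true_or, or_true]
  refine ⟨2 * M + 3, fun g₁ g₂ C L hC₁ hC₂ hL₁ hL₂ hA ↦ ?_⟩
  have hC : 0 ≤ C := (norm_nonneg _).trans (hC₁ 0)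
  obtain ⟨τ, c₀, hτ, hτP, hsmall, hc₀, hc⟩ :=
    exists_kick_duration_and_speed_of_light h𝔟 (cyclotronPeriod_pos h𝔟) L hM hC
  refine ⟨τ, c₀, hτ, hτP, hc₀, fun c hcc x₀ X V h hV ↦ ?_⟩
  have hcircle : ∀ ρ ≥ M / |𝔟|, ∀ z, ∃ u, en u = ρ ∧ z + u ∈ ballT2 x₀ r := fun ρ hρ z ↦
    hρ₀ ρ (((le_div_iff₀' (abs_pos.2 h𝔟)).2 hρM).trans hρ) z x₀
  obtain ⟨t, ht, hmem, hMt⟩ := h.exists_fast_visit h𝔟 hτ hτP hcircle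
    (h.exists_fast h𝔟 hτ hC₁ hC₂ hL₁ hL₂ hA hsmall (hc c hcc).2 (hV.trans hRM))
    (by positivity) (hc c hcc).1
  exact ⟨t, ht, hmem, hmM.trans hMt⟩

end Fast

/-! ### Functions on the torus -/

section Torus

variable {E : Type*} [NormedAddCommGroup E] [NormedSpace ℝ E] {g : V2 → E}

lemma Zper.fderiv (hg : Zper g) : Zper (fderiv ℝ g) := fun x m n ↦ by
  have hshift : g = fun y ↦ g (y + ((m : ℝ), (n : ℝ))) := funext fun y ↦ (hg y m n).symm
  conv_rhs => rw [hshift, fderiv_comp_add_right]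
  rfl

omit [NormedSpace ℝ E] in
lemma Zper.exists_norm_le (hg : Zper g) (hc : Continuous g) : ∃ C, ∀ x, ‖g x‖ ≤ C := by
  obtain ⟨C, hC⟩ :=
    (isCompact_Icc : IsCompact unitSq).exists_bound_of_continuousOn hc.continuousOn
  refine ⟨C, fun x ↦ ?_⟩
  have hfract := hg (Int.fract x.1, Int.fract x.2) ⌊x.1⌋ ⌊x.2⌋
  simp only [Int.fract_add_floor] at hfract
  rw [← Prod.mk.eta (p := x), hfract]
  exact hC _ ⟨⟨Int.fract_nonneg _, Int.fract_nonneg _⟩,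
    ⟨(Int.fract_lt_one _).le, (Int.fract_lt_one _).le⟩⟩

lemma Zper.exists_lipschitzWith (hg : Zper g) (hc : ContDiff ℝ 1 g) : ∃ L, LipschitzWith L g := by
  obtain ⟨C, hC⟩ := hg.fderiv.exists_norm_le (hc.continuous_fderiv one_ne_zero)
  exact ⟨C.toNNReal, lipschitzWith_of_nnnorm_fderiv_le (𝕜 := ℝ) (hc.differentiable one_ne_zero)
    fun x ↦ NNReal.le_toNNReal_of_coe_le (hC x)⟩

lemma setIntegral_unitSq (hg : Continuous g) :
    ∫ x in unitSq, g x = ∫ a in (0 : ℝ)..1, ∫ b in (0 : ℝ)..1, g (a, b) := by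
  have hint : IntegrableOn g (Set.Icc (0 : ℝ) 1 ×ˢ Set.Icc (0 : ℝ) 1) (volume.prod volume) :=
    hg.continuousOn.integrableOn_compact (isCompact_Icc.prod isCompact_Icc)
  simp only [intervalIntegral.integral_of_le zero_le_one, ← integral_Icc_eq_integral_Ioc]
  rw [unitSq, ← Set.Icc_prod_Icc, Measure.volume_eq_prod, setIntegral_prod _ hint]

lemma intervalIntegral_comp_add_right_of_periodic {f : ℝ → E} (hf : Function.Periodic f 1)
    (s : ℝ) : ∫ a in (0 : ℝ)..1, f (a + s) = ∫ a in (0 : ℝ)..1, f a := by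
  rw [intervalIntegral.integral_comp_add_right, zero_add, add_comm, hf.intervalIntegral_add_eq s 0,
    zero_add]

lemma Zper.setIntegral_comp_add (hper : Zper g) (hg : Continuous g) (u : V2) :
    ∫ x in unitSq, g (x + u) = ∫ x in unitSq, g x := by
  have hfst : Function.Periodic (fun a ↦ ∫ b in (0 : ℝ)..1, g (a, b)) 1 := fun a ↦ by
    simpa only [Int.cast_one, Int.cast_zero, add_zero] using
      intervalIntegral.integral_congr fun b _ ↦ hper (a, b) 1 0
  have hsnd (a : ℝ) : Function.Periodic (fun b ↦ g (a, b)) 1 := fun b ↦ by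
    simpa using hper (a, b) 0 1
  rw [setIntegral_unitSq hg, setIntegral_unitSq (by fun_prop),
    ← intervalIntegral_comp_add_right_of_periodic hfst u.1]
  exact intervalIntegral.integral_congr fun a _ ↦
    intervalIntegral_comp_add_right_of_periodic (hsnd (a + u.1)) u.2

lemma Zper.setIntegral_eq_zero (hper : Zper g) (hg : Continuous g) {u : V2}
    (hu : Function.Antiperiodic g u) : ∫ x in unitSq, g x = 0 := by
  have hneg := hper.setIntegral_comp_add hg u
  simp only [hu _, integral_neg] at hneg
  have : IsAddTorsionFree E := .of_isTorsionFree ℝ E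
  exact self_eq_neg.1 hneg.symm

end Torus

/-! ### Plane waves -/

/-- The gradient of a function on the plane, in coordinates. -/
def grad (W : V2 → ℝ) (x : V2) : V2 := (fderiv ℝ W x (1, 0), fderiv ℝ W x (0, 1))

lemma contDiff_grad {W : V2 → ℝ} (hW : ContDiff ℝ (⊤ : ℕ∞) W) :
    ContDiff ℝ (⊤ : ℕ∞) (grad W) := by
  have : ContDiff ℝ (⊤ : ℕ∞) (fderiv ℝ W) := hW.fderiv_right (by simp)
  exact (this.clm_apply contDiff_const).prodMk (this.clm_apply contDiff_const)

lemma Zper.grad {W : V2 → ℝ} (hW : Zper W) : Zper (grad W) := fun x m n ↦ by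
  simp only [_root_.grad, hW.fderiv x m n]

lemma divF_eq {E : V2 → V2} {x : V2} (hE : DifferentiableAt ℝ E x) :
    divF E x = (fderiv ℝ E x (1, 0)).1 + (fderiv ℝ E x (0, 1)).2 := by
  rw [divF, fderiv.fst hE, fderiv.snd hE]
  rfl

lemma divF_sub {E E' : V2 → V2} {x : V2} (hE : DifferentiableAt ℝ E x)
    (hE' : DifferentiableAt ℝ E' x) :
    divF (fun y ↦ E y - E' y) x = divF E x - divF E' x := by
  rw [divF_eq (hE.fun_sub hE'), fderiv_fun_sub hE hE', divF_eq hE, divF_eq hE']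
  simp only [sub_apply, Prod.fst_sub, Prod.snd_sub]
  ring

lemma divF_smul_const {f : V2 → ℝ} {x : V2} (hf : DifferentiableAt ℝ f x) (u : V2) :
    divF (fun y ↦ f y • u) x = fderiv ℝ f x u := by
  have hu : u = u.1 • ((1, 0) : V2) + u.2 • ((0, 1) : V2) := by ext <;> simp
  conv_rhs => rw [hu, map_add, map_smul, map_smul]
  rw [divF_eq (hf.smul_const u), fderiv_smul_const hf]
  simp [mul_comm]

section Wave

variable {d x : V2} {p q : ℝ → ℝ}

/-- The product of a profile `p` along the direction `d` and a profile `q` across it. -/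
def wave (d : V2) (p q : ℝ → ℝ) (x : V2) : ℝ := p (along d x) * q (across d x)

lemma contDiff_wave {n : WithTop ℕ∞} (hp : ContDiff ℝ n p) (hq : ContDiff ℝ n q) (d : V2) :
    ContDiff ℝ n (wave d p q) :=
  (hp.comp (along d).contDiff).mul (hq.comp (across d).contDiff)

lemma fderiv_wave (hp : Differentiable ℝ p) (hq : Differentiable ℝ q) (d x : V2) :
    fderiv ℝ (wave d p q) x =
      wave d (deriv p) q x • along d + wave d p (deriv q) x • across d := by
  have h := ((hp _).hasDerivAt.comp_hasFDerivAt x (along d).hasFDerivAt).mul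
    ((hq _).hasDerivAt.comp_hasFDerivAt x (across d).hasFDerivAt)
  refine (HasFDerivAt.fderiv (f := wave d p q) h).trans ?_
  simp only [wave, smul_smul, Function.comp_apply]
  rw [add_comm, mul_comm (q _)]

lemma grad_wave (hp : Differentiable ℝ p) (hq : Differentiable ℝ q) (d x : V2) :
    grad (wave d p q) x = wave d (deriv p) q x • d - wave d p (deriv q) x • pperp d := by
  ext <;> simp [grad, fderiv_wave hp hq, along_apply, across_apply, pperp]
  ring

lemma along_self (d : V2) : along d d = en d ^ 2 := by
  rw [along_apply, en_sq]
  ring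

lemma across_self (d : V2) : across d d = 0 := by
  rw [across_apply]
  ring

lemma fderiv_wave_self (hp : Differentiable ℝ p) (hq : Differentiable ℝ q) (d x : V2) :
    fderiv ℝ (wave d p q) x d = en d ^ 2 * wave d (deriv p) q x := by
  simp [fderiv_wave hp hq, along_self, across_self, mul_comm]

lemma divF_grad_wave (hp : ContDiff ℝ (⊤ : ℕ∞) p) (hq : ContDiff ℝ (⊤ : ℕ∞) q) (d x : V2) :
    divF (grad (wave d p q)) x =
      en d ^ 2 * (wave d (deriv (deriv p)) q x + wave d p (deriv (deriv q)) x) := by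
  have hdiff {f : ℝ → ℝ} (hf : ContDiff ℝ (⊤ : ℕ∞) f) : Differentiable ℝ f :=
    hf.differentiable (by simp)
  have hp' := contDiff_infty_iff_deriv.1 hp |>.2
  have hq' := contDiff_infty_iff_deriv.1 hq |>.2
  have h₁ := (contDiff_wave hp' hq d).differentiable (by simp) x
  have h₂ := (contDiff_wave hp hq' d).differentiable (by simp) x
  rw [funext (grad_wave (hdiff hp) (hdiff hq) d), divF_sub (h₁.smul_const d) (h₂.smul_const _),
    divF_smul_const h₁, divF_smul_const h₂, fderiv_wave_self (hdiff hp') (hdiff hq),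
    fderiv_wave (hdiff hp) (hdiff hq')]
  simp only [add_apply, smul_apply, along_pperp_self, across_pperp_self, smul_eq_mul]
  ring

lemma abs_deriv_le_two_mul_norm_grad_wave (hp : Differentiable ℝ p) (hq : Differentiable ℝ q)
    (hq1 : ∀ s, 1 ≤ q s) (hd : 1 ≤ en d) :
    |deriv p (along d x)| ≤ 2 * ‖grad (wave d p q) x‖ := by
  have halong : along d (grad (wave d p q) x) = en d ^ 2 * wave d (deriv p) q x := by
    simp only [grad_wave hp hq, map_sub, map_smul, along_self, along_pperp_self, smul_eq_mul]
    ring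
  have hle : en d ^ 2 * |wave d (deriv p) q x| ≤ en d * (2 * ‖grad (wave d p q) x‖) := calc
    _ = |along d (grad (wave d p q) x)| := by
      rw [halong, abs_mul, abs_of_nonneg (sq_nonneg (en d))]
    _ ≤ 2 * (‖d‖ * ‖grad (wave d p q) x‖) :=
      abs_le'.2 ⟨along_le _ _, by simpa using along_le d (-grad (wave d p q) x)⟩
    _ ≤ 2 * (en d * ‖grad (wave d p q) x‖) := by gcongr; exact norm_le_en d
    _ = _ := by ring
  rw [sq, mul_assoc, mul_le_mul_iff_right₀ (one_pos.trans_le hd)] at hle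
  calc |deriv p (along d x)| ≤ |deriv p (along d x)| * q (across d x) :=
        le_mul_of_one_le_right (abs_nonneg _) (hq1 _)
    _ = |wave d (deriv p) q x| := by
        rw [wave, abs_mul, abs_of_pos (one_pos.trans_le (hq1 _))]
    _ ≤ en d * |wave d (deriv p) q x| := le_mul_of_one_le_left (abs_nonneg _) hd
    _ ≤ _ := hle

end Wave

/-! ### Modes vanishing on an open set -/

/-- A stationary potential `W` with its charge density `ρ = ΔW`, together with a vector field `J`
of divergence `-ρ`. If `W` is modulated in time by `η`, then `η' • J` is a current which conserves
the charge `η • ρ`. The charge and the current vanish on `U`. -/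
structure IsMode (U : Set V2) (W ρ : V2 → ℝ) (J : V2 → V2) : Prop where
  contDiff_potential : ContDiff ℝ (⊤ : ℕ∞) W
  contDiff_charge : ContDiff ℝ (⊤ : ℕ∞) ρ
  contDiff_current : ContDiff ℝ (⊤ : ℕ∞) J
  zper_potential : Zper W
  zper_charge : Zper ρ
  zper_current : Zper J
  divF_grad : ∀ x, divF (grad W) x = ρ x
  divF_current : ∀ x, divF J x = -ρ x
  integral_charge : ∫ x in unitSq, ρ x = 0
  integral_current : ∫ x in unitSq, J x = 0
  charge_eq_zero : ∀ x ∈ U, ρ x = 0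
  current_eq_zero : ∀ x ∈ U, J x = 0

lemma deriv_periodic {f : ℝ → ℝ} {T : ℝ} (hf : Function.Periodic f T) :
    Function.Periodic (deriv f) T := fun s ↦ by
  rw [← deriv_comp_add_const, funext hf]

lemma deriv_antiperiodic {f : ℝ → ℝ} {T : ℝ} (hf : Function.Antiperiodic f T) :
    Function.Antiperiodic (deriv f) T := fun s ↦ by
  rw [← deriv_comp_add_const, funext hf, deriv.fun_neg]

section WaveMode

variable {k₁ k₂ : ℤ} {p q e : ℝ → ℝ} {l : ℝ}

lemma zper_wave (k₁ k₂ : ℤ) (hp : Function.Periodic p 1) (hq : Function.Periodic q 1) :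
    Zper (wave (k₁, k₂) p q) := fun x m n ↦ by
  have hp' := hp.int_mul (k₁ * m + k₂ * n) (along (k₁, k₂) x)
  have hq' := hq.int_mul (k₁ * n - k₂ * m) (across (k₁, k₂) x)
  simp only [wave]
  rw [← hp', ← hq']
  congr 2 <;> simp only [along_apply, across_apply] <;> push_cast <;> ring

lemma wave_antiperiodic {d : V2} (hd : d ≠ 0) (hp : Function.Antiperiodic p (1 / 2))
    (q : ℝ → ℝ) : Function.Antiperiodic (wave d p q) ((2 * en d ^ 2)⁻¹ • d) := fun x ↦ by
  have hen : en d ≠ 0 := en_eq_zero.not.2 hd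
  have hhalf : (2 * en d ^ 2)⁻¹ * en d ^ 2 = 1 / 2 := by field_simp
  simp only [wave, map_add, map_smul, along_self, across_self, smul_eq_mul, mul_zero, add_zero,
    hhalf, hp _, neg_mul]

/-- A nonzero multiple of `ΔW` for `W = wave d p e` with `p'' = -l² p`, as a function across `d`:
it vanishes where `e` is an exponential of rate `l`. -/
def chargeProfile (l : ℝ) (e : ℝ → ℝ) (s : ℝ) : ℝ := deriv (deriv e) s - l ^ 2 * e s

lemma contDiff_chargeProfile (l : ℝ) (he : ContDiff ℝ (⊤ : ℕ∞) e) :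
    ContDiff ℝ (⊤ : ℕ∞) (chargeProfile l e) :=
  (contDiff_infty_iff_deriv.1 (contDiff_infty_iff_deriv.1 he).2).2.sub (contDiff_const.mul he)

lemma chargeProfile_periodic (l : ℝ) {T : ℝ} (he : Function.Periodic e T) :
    Function.Periodic (chargeProfile l e) T := fun s ↦ by
  rw [chargeProfile, deriv_periodic (deriv_periodic he), he, chargeProfile]

lemma chargeProfile_comp_sub_const (l : ℝ) (e : ℝ → ℝ) (s₀ s : ℝ) :
    chargeProfile l (fun s ↦ e (s - s₀)) s = chargeProfile l e (s - s₀) := by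
  have h (f : ℝ → ℝ) : deriv (fun s ↦ f (s - s₀)) = fun s ↦ deriv f (s - s₀) :=
    funext fun _ ↦ deriv_comp_sub_const ..
  rw [chargeProfile, h, h, chargeProfile]

lemma isMode_wave {U : Set V2} (hk : ((k₁ : ℝ), (k₂ : ℝ)) ≠ 0) (hl : l ≠ 0)
    (hp : ContDiff ℝ (⊤ : ℕ∞) p) (hpa : Function.Antiperiodic p (1 / 2))
    (hp'' : ∀ θ, deriv (deriv p) θ = -(l ^ 2 * p θ)) (he : ContDiff ℝ (⊤ : ℕ∞) e)
    (hep : Function.Periodic e 1) (hU : ∀ x ∈ U, chargeProfile l e (across (k₁, k₂) x) = 0) :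
    let d : V2 := (k₁, k₂)
    IsMode U (wave d p e) (fun x ↦ en d ^ 2 * wave d p (chargeProfile l e) x)
      (fun x ↦ wave d (deriv p) (chargeProfile l e) x • (l ^ 2)⁻¹ • d) := by
  intro d
  have hp' := (contDiff_infty_iff_deriv.1 hp).2
  have hq := contDiff_chargeProfile l he
  have hdiff {f : ℝ → ℝ} (hf : ContDiff ℝ (⊤ : ℕ∞) f) : Differentiable ℝ f :=
    hf.differentiable (by simp)
  have hperiodic {f : ℝ → ℝ} (hf : Function.Antiperiodic f (1 / 2)) : Function.Periodic f 1 := by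
    simpa using hf.periodic_two_mul
  have hρ := contDiff_wave hp hq d
  have hJ := contDiff_wave hp' hq d
  have hρper := zper_wave k₁ k₂ (hperiodic hpa) (chargeProfile_periodic l hep)
  have hJper := zper_wave k₁ k₂ (hperiodic (deriv_antiperiodic hpa)) (chargeProfile_periodic l hep)
  refine ⟨contDiff_wave hp he d, contDiff_const.mul hρ, hJ.smul contDiff_const,
    zper_wave k₁ k₂ (hperiodic hpa) hep, fun x m n ↦ by rw [hρper], fun x m n ↦ by rw [hJper],
    fun x ↦ ?_, fun x ↦ ?_, ?_, ?_, fun x hx ↦ ?_, fun x hx ↦ ?_⟩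
  · rw [divF_grad_wave hp he]
    simp only [wave, hp'', chargeProfile]
    ring
  · rw [divF_smul_const (hJ.differentiable (by simp) x), map_smul,
      fderiv_wave_self (hdiff hp') (hdiff hq)]
    simp only [wave, hp'', smul_eq_mul]
    field_simp
  · rw [integral_const_mul,
      hρper.setIntegral_eq_zero hρ.continuous (wave_antiperiodic hk hpa _), mul_zero]
  · rw [integral_smul_const, hJper.setIntegral_eq_zero hJ.continuous
      (wave_antiperiodic hk (deriv_antiperiodic hpa) _), zero_smul]
  · rw [wave, hU x hx, mul_zero, mul_zero]
  · rw [wave, hU x hx, mul_zero, zero_smul]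

end WaveMode

/-- The `1`-periodic oscillation of amplitude `A` and phase `α`. -/
def osc (A α θ : ℝ) : ℝ := A * cos (2 * π * θ + α)

lemma contDiff_osc (A α : ℝ) {n : WithTop ℕ∞} : ContDiff ℝ n (osc A α) :=
  contDiff_const.mul (Real.contDiff_cos.comp (by fun_prop))

lemma osc_antiperiodic (A α : ℝ) : Function.Antiperiodic (osc A α) (1 / 2) := fun θ ↦ by
  rw [osc, osc, show 2 * π * (θ + 1 / 2) + α = 2 * π * θ + α + π by ring, Real.cos_add_pi]
  ring

lemma deriv_osc (A α : ℝ) : deriv (osc A α) = osc (2 * π * A) (α + π / 2) := funext fun θ ↦ by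
  have h := (((hasDerivAt_const_mul (2 * π) (x := θ)).add_const α).cos.const_mul A).deriv
  rw [osc, ← add_assoc, Real.cos_add_pi_div_two]
  refine h.trans ?_
  ring

lemma deriv_deriv_osc (A α θ : ℝ) :
    deriv (deriv (osc A α)) θ = -((2 * π) ^ 2 * osc A α θ) := by
  rw [deriv_osc, deriv_osc, osc, osc, show α + π / 2 + π / 2 = α + π by ring, ← add_assoc,
    Real.cos_add_pi]
  ring

lemma two_mul_le_abs_deriv_osc_or (A θ : ℝ) :
    2 * A ≤ |deriv (osc A 0) θ| ∨ 2 * A ≤ |deriv (osc A (π / 2)) θ| := by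
  by_contra! h
  have hsin := sq_lt_sq.2 (h.1.trans_le (le_abs_self _))
  have hcos := sq_lt_sq.2 (h.2.trans_le (le_abs_self _))
  rw [deriv_osc, osc, zero_add, Real.cos_add_pi_div_two] at hsin
  rw [deriv_osc, osc, add_halves, Real.cos_add_pi] at hcos
  have hsum : (2 * π * A) ^ 2 < 2 * (2 * A) ^ 2 := by
    nlinarith [Real.sin_sq_add_cos_sq (2 * π * θ)]
  have hπ : (2 : ℝ) ≤ π ^ 2 := by nlinarith [Real.pi_gt_three]
  nlinarith [mul_le_mul_of_nonneg_right hπ (sq_nonneg (2 * A))]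

lemma one_le_en_of_ne_zero {k₁ k₂ : ℤ} (hk : ((k₁ : ℝ), (k₂ : ℝ)) ≠ 0) :
    1 ≤ en ((k₁ : ℝ), (k₂ : ℝ)) := by
  have hpos : (0 : ℝ) < k₁ ^ 2 + k₂ ^ 2 := by
    rw [← en_sq (k₁, k₂)]
    exact pow_pos ((en_nonneg _).lt_of_ne' (en_eq_zero.not.2 hk)) 2
  have hposℤ : 0 < k₁ ^ 2 + k₂ ^ 2 := mod_cast hpos
  have hone : (1 : ℝ) ≤ k₁ ^ 2 + k₂ ^ 2 := mod_cast hposℤ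
  exact Real.one_le_sqrt.2 hone

lemma StripAssumption.exists_modes {ω : Set V2} (hω : IsOpen ω) (hper : Zper fun x ↦ x ∈ ω)
    (hs : StripAssumption ω) :
    ∃ U, IsOpen U ∧ ωᶜ ⊆ U ∧ ∀ A : ℝ, ∃ W₁ ρ₁ J₁ W₂ ρ₂ J₂, IsMode U W₁ ρ₁ J₁ ∧
      IsMode U W₂ ρ₂ J₂ ∧ ∀ x, A ≤ ‖grad W₁ x‖ ∨ A ≤ ‖grad W₂ x‖ := by
  obtain ⟨k₁, k₂, hk, s₀, κ, hκ, hcos⟩ := hs.exists_cos_le hω hper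
  obtain ⟨κ₁, hκκ₁, hκ₁⟩ := exists_between hκ
  obtain ⟨κ₂, hκ₁₂, hκ₂⟩ := exists_between hκ₁
  have he : ContDiff ℝ (⊤ : ℕ∞) fun s ↦ expProfile (2 * π) κ₁ κ₂ (s - s₀) :=
    (contDiff_expProfile _ hκ₁₂ hκ₂).comp (contDiff_id.sub contDiff_const)
  have hep : Function.Periodic (fun s ↦ expProfile (2 * π) κ₁ κ₂ (s - s₀)) 1 :=
    (expProfile_periodic _ κ₁ κ₂).sub_const s₀
  refine ⟨{x | cos (2 * π * (across (k₁, k₂) x - s₀)) < κ₁}, isOpen_lt (by fun_prop) (by fun_prop),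
    fun x hx ↦ (hcos x hx).trans_lt hκκ₁, fun A ↦ ?_⟩
  have hmode (α : ℝ) := isMode_wave hk two_pi_pos.ne' (contDiff_osc A α) (osc_antiperiodic A α)
    (deriv_deriv_osc A α) he hep
    (U := {x | cos (2 * π * (across (k₁, k₂) x - s₀)) < κ₁}) fun x hx ↦ by
      rw [chargeProfile_comp_sub_const, chargeProfile,
        deriv_deriv_expProfile _ hκ₁₂ hκ₁.le hx, sub_self]
  have hgrad (α : ℝ) (x : V2) := abs_deriv_le_two_mul_norm_grad_wave (d := (k₁, k₂)) (x := x)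
    ((contDiff_osc A α).differentiable one_ne_zero) (he.differentiable (by simp))
    (fun s ↦ one_le_expProfile two_pi_pos.le κ₁ κ₂ _) (one_le_en_of_ne_zero hk)
  refine ⟨_, _, _, _, _, _, hmode 0, hmode (π / 2), fun x ↦ ?_⟩
  exact (two_mul_le_abs_deriv_osc_or A _).imp (fun h ↦ by linarith [hgrad 0 x])
    fun h ↦ by linarith [hgrad (π / 2) x]

/-! ### The reference field -/

section TwoMode

variable {E : Type*} [NormedAddCommGroup E] [NormedSpace ℝ E] {η₁ η₂ : ℝ → ℝ} {W₁ W₂ : V2 → E}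

lemma contDiff_twoMode {n : WithTop ℕ∞} (hη₁ : ContDiff ℝ n η₁) (hη₂ : ContDiff ℝ n η₂)
    (hW₁ : ContDiff ℝ n W₁) (hW₂ : ContDiff ℝ n W₂) : ContDiff ℝ n (twoMode η₁ η₂ W₁ W₂) :=
  ((hη₁.comp contDiff_fst).smul (hW₁.comp contDiff_snd)).add
    ((hη₂.comp contDiff_fst).smul (hW₂.comp contDiff_snd))

lemma zper_twoMode (hW₁ : Zper W₁) (hW₂ : Zper W₂) (t : ℝ) :
    Zper fun x ↦ twoMode η₁ η₂ W₁ W₂ (t, x) := fun x m n ↦ by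
  simp only [twoMode, hW₁ x m n, hW₂ x m n]

lemma fderiv_twoMode_space (hW₁ : Differentiable ℝ W₁) (hW₂ : Differentiable ℝ W₂) (t : ℝ)
    (x : V2) : fderiv ℝ (fun y ↦ twoMode η₁ η₂ W₁ W₂ (t, y)) x =
      twoMode η₁ η₂ (fderiv ℝ W₁) (fderiv ℝ W₂) (t, x) :=
  (((hW₁ x).hasFDerivAt.const_smul (η₁ t)).add ((hW₂ x).hasFDerivAt.const_smul (η₂ t))).fderiv

lemma fderiv_twoMode_time (hη₁ : Differentiable ℝ η₁) (hη₂ : Differentiable ℝ η₂)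
    (hW₁ : Differentiable ℝ W₁) (hW₂ : Differentiable ℝ W₂) (t : ℝ) (x : V2) :
    fderiv ℝ (twoMode η₁ η₂ W₁ W₂) (t, x) (1, 0, 0) =
      twoMode (deriv η₁) (deriv η₂) W₁ W₂ (t, x) := by
  have hderiv {η : ℝ → ℝ} {W : V2 → E} (hη : Differentiable ℝ η) (hW : Differentiable ℝ W) :=
    (HasFDerivAt.comp (f := Prod.fst) (t, x) (hη t).hasFDerivAt hasFDerivAt_fst).smul
      (HasFDerivAt.comp (f := Prod.snd) (t, x) (hW x).hasFDerivAt hasFDerivAt_snd)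
  have h := ((hderiv hη₁ hW₁).add (hderiv hη₂ hW₂)).fderiv
  refine (DFunLike.congr_fun h (1, 0)).trans ?_
  simp [twoMode]

lemma gradx_twoMode {W₁ W₂ : V2 → ℝ} (hW₁ : Differentiable ℝ W₁) (hW₂ : Differentiable ℝ W₂)
    (t : ℝ) (x : V2) :
    gradx (twoMode η₁ η₂ W₁ W₂) t x = twoMode η₁ η₂ (grad W₁) (grad W₂) (t, x) := by
  rw [gradx, fderiv_twoMode_space hW₁ hW₂]
  rfl

lemma divF_twoMode {J₁ J₂ : V2 → V2} (hJ₁ : Differentiable ℝ J₁) (hJ₂ : Differentiable ℝ J₂)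
    (t : ℝ) (x : V2) : divF (fun y ↦ twoMode η₁ η₂ J₁ J₂ (t, y)) x =
      twoMode η₁ η₂ (divF J₁) (divF J₂) (t, x) := by
  have hdiff : Differentiable ℝ fun y ↦ twoMode η₁ η₂ J₁ J₂ (t, y) :=
    (hJ₁.const_smul (η₁ t)).add (hJ₂.const_smul (η₂ t))
  rw [divF_eq (hdiff x), fderiv_twoMode_space hJ₁ hJ₂]
  simp only [twoMode, divF_eq (hJ₁ x), divF_eq (hJ₂ x), add_apply, smul_apply, Prod.fst_add,
    Prod.snd_add, Prod.smul_fst, Prod.smul_snd, smul_eq_mul]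
  ring

lemma setIntegral_twoMode_eq_zero (hW₁ : Continuous W₁) (hW₂ : Continuous W₂)
    (h₁ : ∫ x in unitSq, W₁ x = 0) (h₂ : ∫ x in unitSq, W₂ x = 0) (t : ℝ) :
    ∫ x in unitSq, twoMode η₁ η₂ W₁ W₂ (t, x) = 0 := by
  have hint {W : V2 → E} (hW : Continuous W) (a : ℝ) :
      IntegrableOn (fun x ↦ a • W x) unitSq :=
    (hW.const_smul a).continuousOn.integrableOn_compact isCompact_Icc
  simp only [twoMode]
  rw [integral_add (hint hW₁ _) (hint hW₂ _), integral_smul, integral_smul, h₁, h₂, smul_zero,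
    smul_zero, add_zero]

end TwoMode

/-- A potential `φ` on the torus which solves the Poisson equation with the neutral charge density
`ρ`, and a current density `j` of mean zero which conserves this charge; the charge and the current
vanish on `U`, and outside of the time interval `(0, T)`. -/
structure IsReferenceField (U : Set V2) (T : ℝ) (φ ρ : ℝ × V2 → ℝ) (j : ℝ × V2 → V2) : Prop where
  contDiff_potential : ContDiff ℝ (⊤ : ℕ∞) φ
  contDiff_charge : ContDiff ℝ (⊤ : ℕ∞) ρ
  contDiff_current : ContDiff ℝ (⊤ : ℕ∞) j
  zper_potential : ∀ t, Zper fun x ↦ φ (t, x)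
  zper_charge : ∀ t, Zper fun x ↦ ρ (t, x)
  zper_current : ∀ t, Zper fun x ↦ j (t, x)
  lapx_potential : ∀ t x, lapx φ t x = ρ (t, x)
  charge_conservation : ∀ t x,
    fderiv ℝ ρ (t, x) (1, 0, 0) + divF (fun y ↦ j (t, y)) x = 0
  integral_charge : ∀ t, ∫ x in unitSq, ρ (t, x) = 0
  integral_current : ∀ t, ∫ x in unitSq, j (t, x) = 0
  eq_zero_of_mem : ∀ t, ∀ x ∈ U, ρ (t, x) = 0 ∧ j (t, x) = 0
  eq_zero_of_notMem : ∀ t ∉ Set.Ioo 0 T, ∀ x, ρ (t, x) = 0 ∧ j (t, x) = 0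

lemma IsMode.isReferenceField {U : Set V2} {W₁ ρ₁ W₂ ρ₂ : V2 → ℝ} {J₁ J₂ : V2 → V2}
    {η₁ η₂ : ℝ → ℝ} {T : ℝ}
    (h₁ : IsMode U W₁ ρ₁ J₁) (h₂ : IsMode U W₂ ρ₂ J₂)
    (hη₁ : ContDiff ℝ (⊤ : ℕ∞) η₁) (hη₂ : ContDiff ℝ (⊤ : ℕ∞) η₂)
    (hη₁0 : ∀ t ∉ Set.Ioo 0 T, η₁ t = 0 ∧ deriv η₁ t = 0)
    (hη₂0 : ∀ t ∉ Set.Ioo 0 T, η₂ t = 0 ∧ deriv η₂ t = 0) :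
    IsReferenceField U T (twoMode η₁ η₂ W₁ W₂) (twoMode η₁ η₂ ρ₁ ρ₂)
      (twoMode (deriv η₁) (deriv η₂) J₁ J₂) := by
  have hdiff {F G : Type} [NormedAddCommGroup F] [NormedSpace ℝ F] [NormedAddCommGroup G]
    [NormedSpace ℝ G] {f : F → G} (hf : ContDiff ℝ (⊤ : ℕ∞) f) : Differentiable ℝ f :=
    hf.differentiable (by simp)
  have hgrad {W : V2 → ℝ} (hW : ContDiff ℝ (⊤ : ℕ∞) W) := hdiff (contDiff_grad hW)
  have hW₁ := h₁.contDiff_potential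
  have hW₂ := h₂.contDiff_potential
  have hJ₁ := h₁.contDiff_current
  have hJ₂ := h₂.contDiff_current
  have hlap (t : ℝ) (x : V2) :
      lapx (twoMode η₁ η₂ W₁ W₂) t x = twoMode η₁ η₂ ρ₁ ρ₂ (t, x) := calc
    _ = divF (gradx (twoMode η₁ η₂ W₁ W₂) t) x := rfl
    _ = _ := by
      rw [funext (gradx_twoMode (hdiff hW₁) (hdiff hW₂) t), divF_twoMode (hgrad hW₁) (hgrad hW₂),
        funext h₁.divF_grad, funext h₂.divF_grad]
  refine ⟨contDiff_twoMode hη₁ hη₂ hW₁ hW₂,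
    contDiff_twoMode hη₁ hη₂ h₁.contDiff_charge h₂.contDiff_charge,
    contDiff_twoMode (contDiff_infty_iff_deriv.1 hη₁).2 (contDiff_infty_iff_deriv.1 hη₂).2 hJ₁ hJ₂,
    zper_twoMode h₁.zper_potential h₂.zper_potential, zper_twoMode h₁.zper_charge h₂.zper_charge,
    zper_twoMode h₁.zper_current h₂.zper_current, hlap, fun t x ↦ ?_,
    setIntegral_twoMode_eq_zero h₁.contDiff_charge.continuous h₂.contDiff_charge.continuous
      h₁.integral_charge h₂.integral_charge,
    setIntegral_twoMode_eq_zero hJ₁.continuous hJ₂.continuous h₁.integral_current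
      h₂.integral_current,
    fun t x hx ↦ ?_, fun t ht x ↦ ?_⟩
  · rw [fderiv_twoMode_time (hdiff hη₁) (hdiff hη₂) (hdiff h₁.contDiff_charge)
      (hdiff h₂.contDiff_charge), divF_twoMode (hdiff hJ₁) (hdiff hJ₂),
      funext h₁.divF_current, funext h₂.divF_current]
    simp only [twoMode, smul_eq_mul]
    ring
  · simp [twoMode, h₁.charge_eq_zero x hx, h₂.charge_eq_zero x hx,
      h₁.current_eq_zero x hx, h₂.current_eq_zero x hx]
  · simp [twoMode, hη₁0 t ht, hη₂0 t ht]

lemma StripAssumption.exists_isReferenceField {ω : Set V2} (hω : IsOpen ω)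
    (hper : Zper fun x ↦ x ∈ ω) (hs : StripAssumption ω) {𝔟 r : ℝ} (h𝔟 : 𝔟 ≠ 0) (hr : 0 < r)
    (R m : ℝ) :
    ∃ U, IsOpen U ∧ ωᶜ ⊆ U ∧ ∃ T > 0, ∃ c₀ > 0, ∃ φ ρ j, IsReferenceField U T φ ρ j ∧
      ∀ c ≥ c₀, ∀ (x₀ : V2) (X V : ℝ → V2), IsTrajectory c 𝔟 (gradx φ) Set.univ X V →
        en (V 0) ≤ R → ∃ t ∈ Set.Icc (T / 9) (8 * T / 9), X t ∈ ballT2 x₀ r ∧ m ≤ en (V t) := by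
  obtain ⟨U, hU, hωU, hmodes⟩ := hs.exists_modes hω hper
  obtain ⟨A, hA⟩ := exists_kick_amplitude h𝔟 hr R m
  obtain ⟨W₁, ρ₁, J₁, W₂, ρ₂, J₂, h₁, h₂, hgrad⟩ := hmodes A
  have hW₁ := h₁.contDiff_potential
  have hW₂ := h₂.contDiff_potential
  have hpair : Zper fun x ↦ (grad W₁ x, grad W₂ x) := fun x k l ↦
    Prod.ext (h₁.zper_potential.grad x k l) (h₂.zper_potential.grad x k l)
  have hpair' : ContDiff ℝ (⊤ : ℕ∞) fun x ↦ (grad W₁ x, grad W₂ x) :=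
    (contDiff_grad hW₁).prodMk (contDiff_grad hW₂)
  obtain ⟨C, hC⟩ := hpair.exists_norm_le hpair'.continuous
  obtain ⟨L, hL⟩ := hpair.exists_lipschitzWith (hpair'.of_le (mod_cast le_top))
  obtain ⟨τ, c₀, hτ, hτP, hc₀, hvisit⟩ := hA (grad W₁) (grad W₂) C L
    (fun x ↦ (norm_fst_le _).trans (hC x)) (fun x ↦ (norm_snd_le _).trans (hC x))
    ((LipschitzWith.prod_fst.comp hL).weaken (one_mul L).le)
    ((LipschitzWith.prod_snd.comp hL).weaken (one_mul L).le) hgrad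
  set P := cyclotronPeriod 𝔟
  have hP : 0 < P := cyclotronPeriod_pos h𝔟
  have hpulse {a : ℝ} (ha₀ : 0 < a) (ha : a ≤ 4 * P) (t : ℝ) (ht : t ∉ Set.Ioo 0 (9 * P)) :
      pulse a τ t = 0 ∧ deriv (pulse a τ) t = 0 := by
    have ht' : t ∉ Set.Ioo a (a + τ) := fun h ↦ ht ⟨ha₀.trans h.1, by linarith [h.2]⟩
    exact ⟨pulse_eq_zero hτ ht', deriv_pulse_eq_zero hτ ht'⟩
  refine ⟨U, hU, hωU, 9 * P, by positivity, c₀, hc₀, _, _, _,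
    h₁.isReferenceField h₂ (contDiff_pulse P τ) (contDiff_pulse (3 * P + τ) τ)
      (hpulse hP (by linarith)) (hpulse (by positivity) (by linarith)), fun c hc x₀ X V h hV ↦ ?_⟩
  rw [show 9 * P / 9 = P by ring, show 8 * (9 * P) / 9 = 8 * P by ring]
  refine hvisit c hc x₀ X V (h.congr subset_rfl fun t _ ↦ funext fun x ↦ ?_) hV
  exact gradx_twoMode (hW₁.differentiable (by simp)) (hW₂.differentiable (by simp)) t x

/-! ### Velocity distributions with prescribed charge and current -/

lemma integral_eq_zero_of_odd {G E : Type*} [MeasurableSpace G] [AddGroup G] [MeasurableNeg G]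
    [NormedAddCommGroup E] [NormedSpace ℝ E] (μ : Measure G) [μ.IsNegInvariant] {f : G → E}
    (hf : Function.Odd f) : ∫ x, f x ∂μ = 0 := by
  have h := integral_neg_eq_self f μ
  simp only [hf.eq, integral_neg] at h
  have : IsAddTorsionFree E := .of_isTorsionFree ℝ E
  exact self_eq_neg.1 h.symm

lemma integral_mul_mul_prod (a b f g : ℝ → ℝ) :
    ∫ v : V2, a v.1 * b v.2 * (f v.1 * g v.2) = (∫ s, f s * a s) * ∫ s, g s * b s := by
  rw [← integral_prod_mul, ← Measure.volume_eq_prod]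
  exact integral_congr_ae (.of_forall fun v ↦ by ring)

lemma contDiff_lorentz (c : ℝ) {n : WithTop ℕ∞} : ContDiff ℝ n (lorentz c) := by
  refine ContDiff.sqrt ?_ fun v ↦ by positivity
  simp only [en_sq]
  fun_prop

lemma contDiff_vhat (c : ℝ) {n : WithTop ℕ∞} : ContDiff ℝ n (vhat c) := by
  rw [funext (vhat_eq c)]
  exact ((contDiff_lorentz c).inv fun v ↦ (lorentz_pos c v).ne').smul contDiff_id

lemma lorentz_even (c : ℝ) : Function.Even (lorentz c) := fun v ↦
  lorentz_congr c (by simp [en])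

/-- A smooth even probability density on `[-1, 1]`, with a positive second moment. Two copies of it,
one for each coordinate, make up the profile of the velocity distributions. -/
structure IsEvenBump (a : ℝ → ℝ) : Prop where
  contDiff : ContDiff ℝ (⊤ : ℕ∞) a
  eq_zero : ∀ s, 1 ≤ |s| → a s = 0
  even : Function.Even a
  integral_eq_one : ∫ s, a s = 1
  integral_sq_mul_pos : 0 < ∫ s, s ^ 2 * a s

lemma exists_isEvenBump : ∃ a, IsEvenBump a := by
  let b : ContDiffBump (0 : ℝ) := ⟨1 / 2, 1, by norm_num, by norm_num⟩
  have hsupp : Function.support (b.normed volume) = Metric.ball 0 1 := b.support_normed_eq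
  have hc : Continuous (b.normed volume) := (b.contDiff_normed (n := 0)).continuous
  have hhalf : b.normed volume (1 / 2) ≠ 0 := by
    rw [← Function.mem_support, hsupp, Metric.mem_ball, dist_zero_right]
    norm_num
  refine ⟨b.normed volume, b.contDiff_normed, fun s hs ↦ ?_, fun s ↦ b.normed_neg s,
    b.integral_normed, ?_⟩
  · rw [← Function.notMem_support, hsupp]
    simpa using hs
  · exact Continuous.integral_pos_of_hasCompactSupport_nonneg_nonzero (x := 1 / 2) (by fun_prop)
      b.hasCompactSupport_normed.mul_left (fun s ↦ mul_nonneg (sq_nonneg s) (b.nonneg_normed s))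
      (mul_ne_zero (by norm_num) hhalf)

/-- The velocity distribution of charge density `ρ` and current density `J` built on the profile
`a`. The Lorentz factor cancels that of the relativistic velocity, so that the moments do not
depend on `c`. -/
def velDist (a : ℝ → ℝ) (c ρ : ℝ) (J v : V2) : ℝ :=
  a v.1 * a v.2 * (ρ + lorentz c v * along J v / ∫ s, s ^ 2 * a s)

@[simp]
lemma velDist_zero (a : ℝ → ℝ) (c : ℝ) (v : V2) : velDist a c 0 0 v = 0 := by
  simp [velDist, along_apply]

lemma contDiff_velDist {a : ℝ → ℝ} (ha : ContDiff ℝ (⊤ : ℕ∞) a) (c : ℝ) {ρ : ℝ × V2 → ℝ}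
    {j : ℝ × V2 → V2} (hρ : ContDiff ℝ (⊤ : ℕ∞) ρ) (hj : ContDiff ℝ (⊤ : ℕ∞) j) :
    ContDiff ℝ (⊤ : ℕ∞) fun p : ℝ × V2 × V2 ↦
      velDist a c (ρ (p.1, p.2.1)) (j (p.1, p.2.1)) p.2.2 := by
  have := contDiff_lorentz c (n := (⊤ : ℕ∞))
  simp only [velDist, along_apply]
  refine ContDiff.mul (by fun_prop) (ContDiff.add (by fun_prop) (ContDiff.div_const ?_ _))
  fun_prop

namespace IsEvenBump

variable {a : ℝ → ℝ} (ha : IsEvenBump a)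
include ha

lemma mul_eq_zero_of_two_le {v : V2} (hv : 2 ≤ en v) : a v.1 * a v.2 = 0 := by
  have h : 1 ≤ |v.1| ∨ 1 ≤ |v.2| := by
    by_contra! h
    have hfst := (sq_lt_one_iff_abs_lt_one _).2 h.1
    have hsnd := (sq_lt_one_iff_abs_lt_one _).2 h.2
    nlinarith [en_sq v]
  rcases h with h | h <;> simp [ha.eq_zero _ h]

lemma integrable_mul {g : V2 → ℝ} (hg : Continuous g) :
    Integrable fun v : V2 ↦ a v.1 * a v.2 * g v := by
  have := ha.contDiff.continuous
  refine Continuous.integrable_of_hasCompactSupport (by fun_prop) <|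
    .of_support_subset_isCompact (isCompact_closedBall (0 : V2) 1) fun v hv ↦ ?_
  by_contra h
  rw [mem_closedBall_zero_iff, Prod.norm_def, max_le_iff, not_and_or, not_le, not_le] at h
  rcases h with h | h <;> exact hv (by simp [ha.eq_zero _ h.le])

lemma integral_mul_of_odd {g : V2 → ℝ} (hg : Function.Odd g) :
    ∫ v : V2, a v.1 * a v.2 * g v = 0 :=
  integral_eq_zero_of_odd volume fun v ↦ by
    rw [Prod.fst_neg, Prod.snd_neg, ha.even, ha.even, hg, mul_neg]

lemma integral_mul_along_mul_along (u w : V2) :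
    ∫ v : V2, a v.1 * a v.2 * (along u v * along w v) = along u w * ∫ s, s ^ 2 * a s := by
  have hodd : ∫ s, s * a s = 0 := integral_eq_zero_of_odd volume fun s ↦ by
    rw [ha.even, neg_mul]
  have hfst : ∫ v : V2, a v.1 * a v.2 * (v.1 ^ 2 * 1) = ∫ s, s ^ 2 * a s := by
    simpa [ha.integral_eq_one] using integral_mul_mul_prod a a (· ^ 2) 1
  have hsnd : ∫ v : V2, a v.1 * a v.2 * (1 * v.2 ^ 2) = ∫ s, s ^ 2 * a s := by
    simpa [ha.integral_eq_one] using integral_mul_mul_prod a a 1 (· ^ 2)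
  have hmix : ∫ v : V2, a v.1 * a v.2 * (v.1 * v.2) = 0 := by
    simpa [hodd] using integral_mul_mul_prod a a id id
  have hexpand (v : V2) : a v.1 * a v.2 * (along u v * along w v) =
      u.1 * w.1 * (a v.1 * a v.2 * (v.1 ^ 2 * 1)) + u.2 * w.2 * (a v.1 * a v.2 * (1 * v.2 ^ 2)) +
        (u.1 * w.2 + u.2 * w.1) * (a v.1 * a v.2 * (v.1 * v.2)) := by
    simp only [along_apply]
    ring
  simp only [hexpand]
  rw [integral_add, integral_add, integral_const_mul, integral_const_mul, integral_const_mul,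
    hfst, hsnd, hmix, along_apply]
  · ring
  · exact (ha.integrable_mul (by fun_prop)).const_mul _
  · exact (ha.integrable_mul (by fun_prop)).const_mul _
  · exact ((ha.integrable_mul (by fun_prop)).const_mul _).add
      ((ha.integrable_mul (by fun_prop)).const_mul _)
  · exact (ha.integrable_mul (by fun_prop)).const_mul _

variable (c ρ : ℝ) (J : V2)

lemma velDist_eq_zero {v : V2} (hv : 2 ≤ en v) : velDist a c ρ J v = 0 := by
  rw [velDist, ha.mul_eq_zero_of_two_le hv, zero_mul]

lemma integral_velDist : ∫ v, velDist a c ρ J v = ρ := by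
  have := (contDiff_lorentz c (n := 0)).continuous
  have hodd : Function.Odd fun v ↦ lorentz c v * along J v / ∫ s, s ^ 2 * a s := fun v ↦ by
    simp only [(lorentz_even c).eq, map_neg, mul_neg, neg_div]
  have hmass : ∫ v : V2, a v.1 * a v.2 = 1 := by
    rw [Measure.volume_eq_prod, integral_prod_mul, ha.integral_eq_one, one_mul]
  simp only [velDist, mul_add (a _ * a _)]
  rw [integral_add (ha.integrable_mul continuous_const) (ha.integrable_mul (by fun_prop)),
    ha.integral_mul_of_odd hodd, integral_mul_const, hmass, one_mul, add_zero]

lemma integral_velDist_mul_along_vhat (u : V2) :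
    ∫ v, velDist a c ρ J v * along u (vhat c v) = along J u := by
  have := (contDiff_lorentz c (n := 0)).continuous
  have hmoment := ha.integral_sq_mul_pos.ne'
  have hsplit (v : V2) : velDist a c ρ J v * along u (vhat c v) =
      a v.1 * a v.2 * (ρ * (lorentz c v)⁻¹ * along u v) +
        (∫ s, s ^ 2 * a s)⁻¹ * (a v.1 * a v.2 * (along J v * along u v)) := by
    have := (lorentz_pos c v).ne'
    rw [velDist, vhat_eq, map_smul, smul_eq_mul]
    field_simp
  have hodd : Function.Odd fun v ↦ ρ * (lorentz c v)⁻¹ * along u v := fun v ↦ by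
    simp only [(lorentz_even c).eq, map_neg, mul_neg]
  simp only [hsplit]
  rw [integral_add, ha.integral_mul_of_odd hodd, integral_const_mul,
    ha.integral_mul_along_mul_along, zero_add, mul_comm, mul_inv_cancel_right₀ hmoment]
  · exact ha.integrable_mul (by fun_prop (disch := exact fun v ↦ (lorentz_pos c v).ne'))
  · exact (ha.integrable_mul (by fun_prop)).const_mul _

lemma integral_velDist_mul_vhat :
    (∫ v, velDist a c ρ J v * (vhat c v).1, ∫ v, velDist a c ρ J v * (vhat c v).2) = J := by
  ext
  · simpa [along_apply] using ha.integral_velDist_mul_along_vhat c ρ J (1, 0)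
  · simpa [along_apply] using ha.integral_velDist_mul_along_vhat c ρ J (0, 1)

end IsEvenBump

/-! ### The source -/

/-- The source of the Vlasov equation in divergence form which is solved by the density `F`, in the
electric field `E` and the magnetic field `𝔟`. -/
def vlasovSource (c 𝔟 : ℝ) (E : ℝ → V2 → V2) (F : ℝ × V2 × V2 → ℝ) (p : ℝ × V2 × V2) : ℝ :=
  fderiv ℝ F p (1, vhat c p.2.2, (0, 0)) +
    fderiv ℝ (fun w ↦ (E p.1 p.2.1 + 𝔟 • pperp (vhat c w)).1 * F (p.1, p.2.1, w)) p.2.2 (1, 0) +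
    fderiv ℝ (fun w ↦ (E p.1 p.2.1 + 𝔟 • pperp (vhat c w)).2 * F (p.1, p.2.1, w)) p.2.2 (0, 1)

lemma contDiff_vlasovSource (c 𝔟 : ℝ) {E : ℝ → V2 → V2} {F : ℝ × V2 × V2 → ℝ}
    (hE : ContDiff ℝ (⊤ : ℕ∞) fun p : ℝ × V2 ↦ E p.1 p.2) (hF : ContDiff ℝ (⊤ : ℕ∞) F) :
    ContDiff ℝ (⊤ : ℕ∞) (vlasovSource c 𝔟 E F) := by
  have hvhat := contDiff_vhat c (n := (⊤ : ℕ∞))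
  have hpperp : ContDiff ℝ (⊤ : ℕ∞) fun q : (ℝ × V2 × V2) × V2 ↦ pperp (vhat c q.2) :=
    pperpL.contDiff.comp (hvhat.comp contDiff_snd)
  have hforce : ContDiff ℝ (⊤ : ℕ∞) fun q : (ℝ × V2 × V2) × V2 ↦
      E q.1.1 q.1.2.1 + 𝔟 • pperp (vhat c q.2) :=
    (hE.comp (contDiff_fst.fst.prodMk contDiff_fst.snd.fst)).add
      (hpperp.const_smul 𝔟)
  have hdensity : ContDiff ℝ (⊤ : ℕ∞) fun q : (ℝ × V2 × V2) × V2 ↦ F (q.1.1, q.1.2.1, q.2) := by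
    fun_prop
  have hdiv {g : (ℝ × V2 × V2) × V2 → ℝ} (hg : ContDiff ℝ (⊤ : ℕ∞) g) (u : V2) :
      ContDiff ℝ (⊤ : ℕ∞) fun p : ℝ × V2 × V2 ↦ fderiv ℝ (fun w ↦ g (p, w)) p.2.2 u :=
    (ContDiff.fderiv (f := fun p w ↦ g (p, w)) hg contDiff_snd.snd (by simp)).clm_apply
      contDiff_const
  have htransport : ContDiff ℝ (⊤ : ℕ∞) fun p : ℝ × V2 × V2 ↦
      fderiv ℝ F p (1, vhat c p.2.2, (0, 0)) :=
    (hF.fderiv_right (by simp)).clm_apply (by fun_prop)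
  exact (htransport.add (hdiv (hforce.fst.mul hdensity) (1, 0))).add
    (hdiv (hforce.snd.mul hdensity) (0, 1))

open Topology in
lemma vlasovSource_eq_zero (c 𝔟 : ℝ) (E : ℝ → V2 → V2) {F : ℝ × V2 × V2 → ℝ} {p : ℝ × V2 × V2}
    (hF : F =ᶠ[𝓝 p] 0) : vlasovSource c 𝔟 E F p = 0 := by
  have hF' : F =ᶠ[𝓝 p] fun _ ↦ 0 := hF
  have hslice (f : V2 → ℝ) : (fun w ↦ f w * F (p.1, p.2.1, w)) =ᶠ[𝓝 p.2.2] fun _ ↦ 0 := by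
    have hcont : Continuous fun w : V2 ↦ (p.1, p.2.1, w) := by fun_prop
    filter_upwards [hcont.continuousAt.eventually hF] with w hw
    rw [hw, Pi.zero_apply, mul_zero]
  simp only [vlasovSource, hF'.fderiv_eq, (hslice _).fderiv_eq, fderiv_fun_const, Pi.zero_apply,
    zero_apply, add_zero]

lemma contDiff_gradx {φ : ℝ × V2 → ℝ} (hφ : ContDiff ℝ (⊤ : ℕ∞) φ) :
    ContDiff ℝ (⊤ : ℕ∞) fun p : ℝ × V2 ↦ gradx φ p.1 p.2 := by
  have hpartial : ContDiff ℝ (⊤ : ℕ∞) fun p : ℝ × V2 ↦ fderiv ℝ (fun y ↦ φ (p.1, y)) p.2 :=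
    ContDiff.fderiv (f := fun (p : ℝ × V2) y ↦ φ (p.1, y))
      (hφ.comp (contDiff_fst.fst.prodMk contDiff_snd)) contDiff_snd (by simp)
  exact (hpartial.clm_apply contDiff_const).prodMk (hpartial.clm_apply contDiff_const)

/-! ### The reference solution -/

lemma IsReferenceField.intT2_current {U : Set V2} {T : ℝ} {φ ρ : ℝ × V2 → ℝ} {j : ℝ × V2 → V2}
    (h : IsReferenceField U T φ ρ j) (t : ℝ) :
    intT2 (fun x ↦ (j (t, x)).1) = 0 ∧ intT2 (fun x ↦ (j (t, x)).2) = 0 := by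
  have hj : IntegrableOn (fun x ↦ j (t, x)) unitSq :=
    (h.contDiff_current.continuous.comp (Continuous.prodMk_right t)).integrableOn_Icc
  rw [intT2, intT2, ← fst_integral hj, ← snd_integral hj, h.integral_current]
  exact ⟨rfl, rfl⟩

theorem reference_solution_vlasov_poisson_strip_general
    (ω : Set V2) (hωopen : IsOpen ω) (hωper : Zper fun x ↦ x ∈ ω)
    (hstrip : StripAssumption ω)
    (x₀ : V2) (r : ℝ) (hr : 0 < r) (𝔟 : ℝ) (h𝔟 : 𝔟 ≠ 0) (R m : ℝ) :
    ∃ T > 0, ∃ c₀ > 0,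
      ∃ (ρbar : ℝ × V2 → ℝ) (jbar : ℝ × V2 → V2),
      ∀ c ≥ c₀,
        ∃ (F : ℝ × V2 × V2 → ℝ) (φ : ℝ × V2 → ℝ) (G : ℝ × V2 × V2 → ℝ),
          ContDiff ℝ (⊤ : ℕ∞) F ∧ ContDiff ℝ (⊤ : ℕ∞) φ ∧ ContDiff ℝ (⊤ : ℕ∞) G ∧
          (∀ t v, Zper fun x ↦ F (t, x, v)) ∧ (∀ t, Zper fun x ↦ φ (t, x)) ∧
          (∃ Rv : ℝ, ∀ t x v, Rv ≤ en v → F (t, x, v) = 0) ∧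
          (∀ t x v, x ∉ ω → G (t, x, v) = 0) ∧
          (∀ t ∈ Set.Icc 0 T, ∀ x v : V2,
            (fderiv ℝ F (t, x, v) (1, vhat c v, (0, 0))
              + fderiv ℝ
                  (fun w : V2 ↦ (gradx φ t x + 𝔟 • pperp (vhat c w)).1 * F (t, x, w))
                  v (1, 0)
              + fderiv ℝ
                  (fun w : V2 ↦ (gradx φ t x + 𝔟 • pperp (vhat c w)).2 * F (t, x, w))
                  v (0, 1)
              = G (t, x, v)) ∧
            (lapx φ t x = (∫ w : V2, F (t, x, w)) - intT2R2 fun y w ↦ F (t, y, w))) ∧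
          (∀ x v, F (0, x, v) = 0) ∧ (∀ x v, F (T, x, v) = 0) ∧
          (∀ t ∈ Set.Icc 0 T, ∀ v : V2, ∀ x, x ∉ ω → F (t, x, v) = 0) ∧
          (∀ x v : V2, en v < R →
            ∀ X V : ℝ → V2,
              IsRelChar c (fun t y w ↦ gradx φ t y + 𝔟 • pperp (vhat c w)) 0 x v X V →
              ∃ t ∈ Set.Icc (T / 9) (8 * T / 9),
                X t ∈ ballT2 x₀ r ∧ m ≤ en (V t)) ∧
          (∀ t x, ρbar (t, x) = ∫ w : V2, F (t, x, w)) ∧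
          (∀ t x, jbar (t, x)
            = (∫ w : V2, F (t, x, w) * (vhat c w).1,
               ∫ w : V2, F (t, x, w) * (vhat c w).2)) ∧
          (∀ t ∈ Set.Icc 0 T, ∀ x : V2,
            fderiv ℝ ρbar (t, x) (1, 0, 0)
              + divF (fun y ↦ jbar (t, y)) x = 0) ∧
          (∀ t ∈ Set.Icc 0 T,
            intT2 (fun x ↦ (jbar (t, x)).1) = 0 ∧
            intT2 (fun x ↦ (jbar (t, x)).2) = 0) := by
  obtain ⟨U, hU, hωU, T, hT, c₀, hc₀, φ, ρ, j, h, hvisit⟩ :=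
    hstrip.exists_isReferenceField hωopen hωper h𝔟 hr R m
  obtain ⟨a, ha⟩ := exists_isEvenBump
  refine ⟨T, hT, c₀, hc₀, ρ, j, fun c hc ↦ ?_⟩
  set F : ℝ × V2 × V2 → ℝ := fun p ↦ velDist a c (ρ (p.1, p.2.1)) (j (p.1, p.2.1)) p.2.2
  have hF : ContDiff ℝ (⊤ : ℕ∞) F :=
    contDiff_velDist ha.contDiff c h.contDiff_charge h.contDiff_current
  have hF0 {t : ℝ} {x : V2} (h0 : ρ (t, x) = 0 ∧ j (t, x) = 0) (v : V2) : F (t, x, v) = 0 := by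
    simp [F, h0]
  have hmass (t : ℝ) (x : V2) : ∫ w, F (t, x, w) = ρ (t, x) :=
    ha.integral_velDist c (ρ (t, x)) (j (t, x))
  refine ⟨F, φ, vlasovSource c 𝔟 (gradx φ) F, hF, h.contDiff_potential,
    contDiff_vlasovSource c 𝔟 (contDiff_gradx h.contDiff_potential) hF,
    fun t v x k l ↦ ?_, h.zper_potential, ⟨2, fun t x v hv ↦ ha.velDist_eq_zero c _ _ hv⟩,
    fun t x v hx ↦ vlasovSource_eq_zero c 𝔟 _ ?_, fun t _ x v ↦ ⟨rfl, ?_⟩,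
    fun x ↦ hF0 (h.eq_zero_of_notMem 0 (by simp) x),
    fun x ↦ hF0 (h.eq_zero_of_notMem T (by simp) x),
    fun t _ v x hx ↦ hF0 (h.eq_zero_of_mem t x (hωU hx)) v,
    fun x v hv X V hXV ↦ hvisit c hc x₀ X V ⟨fun t _ ↦ (hXV.2.2 t).1, fun t _ ↦ (hXV.2.2 t).2⟩
      (hXV.2.1 ▸ hv.le),
    fun t x ↦ (hmass t x).symm,
    fun t x ↦ (ha.integral_velDist_mul_vhat c (ρ (t, x)) (j (t, x))).symm,
    fun t _ ↦ h.charge_conservation t, fun t _ ↦ h.intT2_current t⟩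
  · exact congrArg₂ (velDist a c · · v) (h.zper_charge t x k l) (h.zper_current t x k l)
  · filter_upwards [(hU.preimage continuous_snd.fst).mem_nhds (hωU hx)] with p hp
    exact hF0 (h.eq_zero_of_mem p.1 p.2.1 hp) p.2.2
  · simp only [intT2R2, hmass, h.lapx_potential, h.integral_charge, sub_zero]

/-- **Reference solution for the relativistic Vlasov–Poisson system with a constant
external magnetic field, under the strip assumption** (Proposition 4.4), satisfying
in addition the local conservation of charge and the zero-mean-current condition,
with charge and current densities independent of the speed of light. -/
theorem reference_solution_vlasov_poisson_strip
    (ω : Set V2) (hωopen : IsOpen ω) (hωper : Zper fun x => x ∈ ω)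
    (hstrip : StripAssumption ω)
    (x₀ : V2) (r₀ : ℝ) (hr₀ : 0 < r₀) (hball : ballT2 x₀ (2 * r₀) ⊆ ω)
    (𝔟 : ℝ) (h𝔟 : 𝔟 ≠ 0) (R : ℝ) (hR : 0 < R) :
    ∃ T > (0 : ℝ), ∃ c₀ > (0 : ℝ),
      ∃ (ρbar : ℝ × V2 → ℝ) (jbar : ℝ × V2 → V2),   -- the c-independent moments
      ∀ c ≥ c₀,
        ∃ (F : ℝ × V2 × V2 → ℝ) (φ : ℝ × V2 → ℝ) (G : ℝ × V2 × V2 → ℝ),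
          -- smoothness and periodicity
          ContDiff ℝ (⊤ : ℕ∞) F ∧ ContDiff ℝ (⊤ : ℕ∞) φ ∧ ContDiff ℝ (⊤ : ℕ∞) G ∧
          (∀ t v, Zper fun x => F (t, x, v)) ∧ (∀ t, Zper fun x => φ (t, x)) ∧
          -- compact support in velocity
          (∃ Rv : ℝ, ∀ t x v, Rv ≤ en v → F (t, x, v) = 0) ∧
          -- the source is spatially supported in ω
          (∀ t x v, x ∉ ω → G (t, x, v) = 0) ∧
          -- (i) Vlasov equation with force ∇ₓφ̄ + v̂⊥𝔟, in divergence form, and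
          -- the Poisson equation
          (∀ t ∈ Set.Icc (0 : ℝ) T, ∀ x v : V2,
            (fderiv ℝ F (t, x, v) ((1 : ℝ), vhat c v, ((0 : ℝ), (0 : ℝ)))
              + fderiv ℝ
                  (fun w : V2 => (gradx φ t x + 𝔟 • pperp (vhat c w)).1 * F (t, x, w))
                  v ((1 : ℝ), (0 : ℝ))
              + fderiv ℝ
                  (fun w : V2 => (gradx φ t x + 𝔟 • pperp (vhat c w)).2 * F (t, x, w))
                  v ((0 : ℝ), (1 : ℝ))
              = G (t, x, v)) ∧
            (lapx φ t x = (∫ w : V2, F (t, x, w)) - intT2R2 fun y w => F (t, y, w))) ∧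
          -- (ii) it starts from 0 and comes back to 0
          (∀ x v, F (0, x, v) = 0) ∧ (∀ x v, F (T, x, v) = 0) ∧
          -- (iii) spatial support in ω
          (∀ t ∈ Set.Icc (0 : ℝ) T, ∀ v : V2, ∀ x, x ∉ ω → F (t, x, v) = 0) ∧
          -- (iv) all characteristics with |v| ≤ R visit B(x₀, r₀/2) with speed ≥ 5
          (∀ x v : V2, en v < R →
            ∀ X V : ℝ → V2,
              IsRelChar c (fun t y w => gradx φ t y + 𝔟 • pperp (vhat c w)) 0 x v X V →
              ∃ t ∈ Set.Icc (T / 9) (8 * T / 9),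
                X t ∈ ballT2 x₀ (r₀ / 2) ∧ 5 ≤ en (V t)) ∧
          -- (v) local conservation of charge and zero mean current, with moments
          -- independent of c
          (∀ t x, ρbar (t, x) = ∫ w : V2, F (t, x, w)) ∧
          (∀ t x, jbar (t, x)
            = (∫ w : V2, F (t, x, w) * (vhat c w).1,
               ∫ w : V2, F (t, x, w) * (vhat c w).2)) ∧
          (∀ t ∈ Set.Icc (0 : ℝ) T, ∀ x : V2,
            fderiv ℝ ρbar (t, x) ((1 : ℝ), ((0 : ℝ), (0 : ℝ)))
              + divF (fun y => jbar (t, y)) x = 0) ∧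
          (∀ t ∈ Set.Icc (0 : ℝ) T,
            intT2 (fun x => (jbar (t, x)).1) = 0 ∧
            intT2 (fun x => (jbar (t, x)).2) = 0) :=
  reference_solution_vlasov_poisson_strip_general ω hωopen hωper hstrip x₀ (r₀ / 2) (half_pos hr₀)
    𝔟 h𝔟 R 5

end
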